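/- arXiv:1104.3528 — 3 statements merged into one kernel-verified Lean document; each statement's English description precedes it below -/
import Mathlib

section
/- For every weighted graph G there exist finitely many weighted graphs L_1, …, L_r, each of which has pairwise non-crossing positively-weighted diagonals, such that in the ring P_n one has I(G) = Σ_{i=1}^r I(L_i), with R_p(L_i) = R_p(G) for every vertex p and every i, and I_{kl}(G) = max_{1≤i≤r} I_{kl}(L_i) for every segment {kl}. -/
/-!
The decomposition is obtained by repeatedly resolving crossings. If two diagonals `ac` and `bd`
of positive weight cross, with `a, b, c, d` clockwise, the Plücker relation gives
`I(G) = I(G₁) + I(G₂)`, where `G₁` (resp. `G₂`) is obtained from `G` by replacing one copy of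
`ac + bd` by `ab + cd` (resp. `ad + bc`).

Every other quantity in the statement is a linear functional `pairing g` of the weight matrix,
so the effect of a step is read off from the values of `g` on the six segments
(`pairing_resolve`):

* row sums do not change;
* a set of consecutive vertices never meets `a, b, c, d` in exactly `{a, c}` or `{b, d}`, and in
  all other cases the number of segments among `ac, bd` it cuts is the maximum of the numbers it
  cuts among `ab, cd` and among `ad, bc` (`Iseg_resolve`);
* the functional `energy`, which gives a segment cutting the polygon into arcs of lengths `d` and
  `N - d` the weight `(d - 1)(N - d - 1)`, strictly decreases (`energy_resolve`). It vanishes on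
  edges, hence is nonnegative on weighted graphs, and the procedure terminates.

The multiplicativity `IG_add` turns the Plücker relation into `I(G) = I(G₁) + I(G₂)`.
-/


open Finset

/-- Vertices `i, j` of the `(n+3)`-gon (labelled by `ZMod (n+3)`) are adjacent,
i.e. the segment `{i j}` is an edge. -/
def IsEdge (n : ℕ) (i j : ZMod (n + 3)) : Prop := i = j + 1 ∨ j = i + 1

/-- The segment `{i j}` is a diagonal of the `(n+3)`-gon. -/
def IsDiag (n : ℕ) (i j : ZMod (n + 3)) : Prop := i ≠ j ∧ ¬ IsEdge n i j

/-- The distinct vertices `p, q, r, s` are in clockwise order. -/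
def Clockwise (n : ℕ) (p q r s : ZMod (n + 3)) : Prop :=
  0 < (q - p).val ∧ (q - p).val < (r - p).val ∧ (r - p).val < (s - p).val

/-- The segments `{i j}` and `{k l}` cross: their endpoints interlace in cyclic order. -/
def Cross (n : ℕ) (i j k l : ZMod (n + 3)) : Prop :=
  Clockwise n i k j l ∨ Clockwise n i l j k

/-- A weighted graph on the `(n+3)`-gon: a symmetric integer matrix with zero diagonal
whose entries at diagonals of the polygon are nonnegative. -/
def IsWG (n : ℕ) (w : ZMod (n + 3) → ZMod (n + 3) → ℤ) : Prop :=
  (∀ i j, w i j = w j i) ∧ (∀ i, w i i = 0) ∧ (∀ i j, IsDiag n i j → 0 ≤ w i j)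

/-- `R_p(G) = Σ_j w_{pj}`, the sum of the weights of segments at the vertex `p`. -/
def Rsum (n : ℕ) (w : ZMod (n + 3) → ZMod (n + 3) → ℤ) (p : ZMod (n + 3)) : ℤ :=
  ∑ j, w p j

/-- `Γ_{kl}(G) = (1/2)·Σ_{k≤i,j≤l} w_{ij} = Σ_{k≤i<j≤l} w_{ij}` (labels `1,…,N` cast
into `ZMod (n+3)`). -/
def Gamma (n : ℕ) (w : ZMod (n + 3) → ZMod (n + 3) → ℤ) (k l : ℕ) : ℤ :=
  ∑ i ∈ Finset.Icc k l, ∑ j ∈ Finset.Icc k l,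
    if i < j then w (i : ZMod (n + 3)) (j : ZMod (n + 3)) else 0

/-- `I_{kl}(G) = Σ_{i∈I, j∈J} w_{ij}` where `I = {k+1,…,l}` and `J = {1,…,N} ∖ I`
(labels cast into `ZMod (n+3)`). -/
def Iseg (n : ℕ) (w : ZMod (n + 3) → ZMod (n + 3) → ℤ) (k l : ℕ) : ℤ :=
  ∑ i ∈ Finset.Icc (k + 1) l, ∑ j ∈ Finset.Icc 1 (n + 3) \ Finset.Icc (k + 1) l,
    w (i : ZMod (n + 3)) (j : ZMod (n + 3))

instance (n : ℕ) (i j : ZMod (n + 3)) : Decidable (IsEdge n i j) := by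
  unfold IsEdge; infer_instance

/-- Ordered pairs of distinct vertices of the `(n+3)`-gon: indices for the
variables `A_{ij}` attached to segments. -/
abbrev Seg (n : ℕ) := {p : ZMod (n + 3) × ZMod (n + 3) // p.1 ≠ p.2}

abbrev SegPolyRing (n : ℕ) := MvPolynomial (Seg n) ℤ

/-- The ideal of `ℤ[A_{ij}]` generated by the symmetry relations `A_{ij} − A_{ji}`
and the Plücker relations `A_{ik}A_{jl} − A_{ij}A_{kl} − A_{il}A_{jk}` for quadruples
`i, j, k, l` in clockwise order. -/
noncomputable def pluIdeal (n : ℕ) : Ideal (SegPolyRing n) :=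
  Ideal.span
    ({p | ∃ (i j : ZMod (n + 3)) (h : i ≠ j),
        p = MvPolynomial.X ⟨(i, j), h⟩ - MvPolynomial.X ⟨(j, i), h.symm⟩} ∪
     {p | ∃ (i j k l : ZMod (n + 3)) (hik : i ≠ k) (hjl : j ≠ l) (hij : i ≠ j)
        (hkl : k ≠ l) (hil : i ≠ l) (hjk : j ≠ k), Clockwise n i j k l ∧
        p = MvPolynomial.X ⟨(i, k), hik⟩ * MvPolynomial.X ⟨(j, l), hjl⟩
          - MvPolynomial.X ⟨(i, j), hij⟩ * MvPolynomial.X ⟨(k, l), hkl⟩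
          - MvPolynomial.X ⟨(i, l), hil⟩ * MvPolynomial.X ⟨(j, k), hjk⟩})

abbrev PlueckerRing (n : ℕ) := SegPolyRing n ⧸ pluIdeal n

/-- The cluster variable `A_{ij}` as an element of the quotient ring. -/
noncomputable def Avar (n : ℕ) (p : Seg n) : PlueckerRing n :=
  Ideal.Quotient.mk (pluIdeal n) (MvPolynomial.X p)

/-- The multiplicative set generated by the edge variables. -/
noncomputable def edgeMonoid (n : ℕ) : Submonoid (PlueckerRing n) :=
  Submonoid.closure {r | ∃ p : Seg n, IsEdge n p.1.1 p.1.2 ∧ r = Avar n p}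

/-- `P_n`: the ring `ℤ[A_{ij}]/(Plücker relations)` localized at the edge variables;
it models the coordinate ring of the cluster `A`-variety `Ã_{Aₙ}` with coefficients. -/
abbrev PRing (n : ℕ) := Localization (edgeMonoid n)

/-- The numerator `∏_{i<j} A_{ij}^{max(w_{ij},0)}` of `I(G)` (each unordered segment
counted once, via `i.val < j.val`). -/
noncomputable def numerIG (n : ℕ) (w : ZMod (n + 3) → ZMod (n + 3) → ℤ) :
    PlueckerRing n :=
  ∏ p : Seg n,
    if p.1.1.val < p.1.2.val then Avar n p ^ (w p.1.1 p.1.2).toNat else 1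

/-- The denominator `∏ A_{ij}^{max(−w_{ij},0)}` of `I(G)`, collecting the (edge)
variables with negative exponents; it lies in the multiplicative set of edge
variables. -/
noncomputable def denomIG (n : ℕ) (w : ZMod (n + 3) → ZMod (n + 3) → ℤ) :
    edgeMonoid n :=
  ∏ p : Seg n,
    if h : IsEdge n p.1.1 p.1.2 ∧ p.1.1.val < p.1.2.val then
      (⟨Avar n p, Submonoid.subset_closure ⟨p, h.1, rfl⟩⟩ : edgeMonoid n)
        ^ (-(w p.1.1 p.1.2)).toNat
    else 1

/-- `I(G) = ∏_{i<j} A_{ij}^{w_{ij}} ∈ P_n` for a weighted graph `G` (negative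
exponents occur only at the invertible edge variables). -/
noncomputable def IG (n : ℕ) (w : ZMod (n + 3) → ZMod (n + 3) → ℤ) : PRing n :=
  Localization.mk (numerIG n w) (denomIG n w)

/-! ### Linear functionals of the weight matrix -/

/-- The weighted graph of the single segment `{x y}` with weight `1`. -/
def segE (n : ℕ) (x y i j : ZMod (n + 3)) : ℤ :=
  (if i = x ∧ j = y then 1 else 0) + (if i = y ∧ j = x then 1 else 0)

/-- The linear functional `w ↦ Σ_{i,j} g_{ij} w_{ij}`. -/
def pairing (n : ℕ) (g w : ZMod (n + 3) → ZMod (n + 3) → ℤ) : ℤ :=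
  ∑ i, ∑ j, g i j * w i j

/-- `w` with the segments `{a c}` and `{b d}` (once each) removed. -/
def remPair (n : ℕ) (w : ZMod (n + 3) → ZMod (n + 3) → ℤ) (a b c d : ZMod (n + 3)) :
    ZMod (n + 3) → ZMod (n + 3) → ℤ :=
  w - segE n a c - segE n b d

lemma pairing_add (n : ℕ) (g u v : ZMod (n + 3) → ZMod (n + 3) → ℤ) :
    pairing n g (u + v) = pairing n g u + pairing n g v := by
  simp [pairing, mul_add, Finset.sum_add_distrib]

lemma pairing_sub (n : ℕ) (g u v : ZMod (n + 3) → ZMod (n + 3) → ℤ) :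
    pairing n g (u - v) = pairing n g u - pairing n g v := by
  simp [pairing, mul_sub, Finset.sum_sub_distrib]

lemma pairing_segE (n : ℕ) (g : ZMod (n + 3) → ZMod (n + 3) → ℤ) (x y : ZMod (n + 3)) :
    pairing n g (segE n x y) = g x y + g y x := by
  simp only [pairing, segE, mul_add, Finset.sum_add_distrib, ite_and, mul_ite, mul_one, mul_zero]
  simp

lemma pairing_resolve (n : ℕ) (g w : ZMod (n + 3) → ZMod (n + 3) → ℤ)
    (a b c d x y z t : ZMod (n + 3)) :
    pairing n g (remPair n w a b c d + segE n x y + segE n z t) =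
      pairing n g w - (g a c + g c a) - (g b d + g d b) + (g x y + g y x) + (g z t + g t z) := by
  simp only [remPair, pairing_add, pairing_sub, pairing_segE]

lemma Rsum_eq_pairing (n : ℕ) (w : ZMod (n + 3) → ZMod (n + 3) → ℤ) (p : ZMod (n + 3)) :
    Rsum n w p = pairing n (fun i _ => if i = p then 1 else 0) w := by
  simp only [Rsum, pairing, ite_mul, one_mul, zero_mul]
  symm
  rw [Finset.sum_eq_single p] <;> simp +contextual

/-! ### Cyclic order -/

lemma val_sub_cases (n : ℕ) (x y : ZMod (n + 3)) :
    (x - y).val + y.val = x.val ∨ (x - y).val + y.val = x.val + (n + 3) := by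
  have h : x.val = ((x - y).val + y.val) % (n + 3) := by
    rw [← ZMod.val_add, sub_add_cancel]
  have h1 := ZMod.val_lt (x - y)
  have h2 := ZMod.val_lt y
  have h3 := ZMod.val_lt x
  by_cases hc : (x - y).val + y.val < n + 3
  · rw [Nat.mod_eq_of_lt hc] at h; omega
  · rw [Nat.mod_eq_sub_mod (by omega), Nat.mod_eq_of_lt (by omega)] at h; omega

/-- The label in `{1, …, N}` of a vertex (the vertex `0` carries the label `N`). -/
def rep (n : ℕ) (x : ZMod (n + 3)) : ℕ := if x.val = 0 then n + 3 else x.val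

lemma rep_mem (n : ℕ) (x : ZMod (n + 3)) : 1 ≤ rep n x ∧ rep n x ≤ n + 3 := by
  have := ZMod.val_lt x
  unfold rep; split_ifs <;> omega

lemma cast_rep (n : ℕ) (x : ZMod (n + 3)) : ((rep n x : ℕ) : ZMod (n + 3)) = x := by
  unfold rep
  split_ifs with h
  · rw [ZMod.natCast_self]; exact ((ZMod.val_eq_zero x).1 h).symm
  · exact ZMod.natCast_zmod_val x

lemma rep_cast (n i : ℕ) (h1 : 1 ≤ i) (h2 : i ≤ n + 3) :
    rep n ((i : ℕ) : ZMod (n + 3)) = i := by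
  unfold rep
  rw [ZMod.val_natCast]
  rcases h2.lt_or_eq with h | h
  · rw [Nat.mod_eq_of_lt h, if_neg (by omega)]
  · subst h; simp

lemma rep_sub_cases (n : ℕ) (x y : ZMod (n + 3)) :
    (x - y).val + rep n y = rep n x ∨ (x - y).val + rep n y = rep n x + (n + 3) := by
  have h := val_sub_cases n x y
  have h1 := ZMod.val_lt (x - y)
  have h2 := ZMod.val_lt y
  have h3 := ZMod.val_lt x
  unfold rep; split_ifs <;> omega

lemma Clockwise.ne {n : ℕ} {a b c d : ZMod (n + 3)} (h : Clockwise n a b c d) :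
    a ≠ b ∧ a ≠ c ∧ a ≠ d ∧ b ≠ c ∧ b ≠ d ∧ c ≠ d := by
  obtain ⟨h1, h2, h3⟩ := h
  refine ⟨?_, ?_, ?_, ?_, ?_, ?_⟩ <;> rintro rfl <;> simp at h1 h2 h3
  omega

/-! ### Cuts by intervals of vertices -/

lemma sum_cast (n : ℕ) (A : Finset ℕ) (hA : ∀ i ∈ A, 1 ≤ i ∧ i ≤ n + 3)
    (g : ZMod (n + 3) → ℤ) :
    ∑ i ∈ A, g (i : ZMod (n + 3)) = ∑ x, if rep n x ∈ A then g x else 0 := by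
  rw [← Finset.sum_filter]
  refine Finset.sum_nbij' (fun i => (i : ZMod (n + 3))) (rep n) ?_ ?_ ?_ ?_ ?_
  · intro i hi
    simp [rep_cast n i (hA i hi).1 (hA i hi).2, hi]
  · intro x hx
    simpa using hx
  · intro i hi
    exact rep_cast n i (hA i hi).1 (hA i hi).2
  · intro x _
    exact cast_rep n x
  · intro i _
    rfl

/-- The coefficients of the functional `I_{kl}`. -/
def cutG (n k l : ℕ) (x y : ZMod (n + 3)) : ℤ :=
  if (k + 1 ≤ rep n x ∧ rep n x ≤ l) ∧ ¬ (k + 1 ≤ rep n y ∧ rep n y ≤ l) then 1 else 0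

lemma Iseg_eq_pairing (n : ℕ) (w : ZMod (n + 3) → ZMod (n + 3) → ℤ) (k l : ℕ)
    (hl : l ≤ n + 3) : Iseg n w k l = pairing n (cutG n k l) w := by
  unfold Iseg pairing
  rw [sum_cast n (Finset.Icc (k + 1) l) (by simp only [Finset.mem_Icc]; omega)
    (fun x => ∑ j ∈ Finset.Icc 1 (n + 3) \ Finset.Icc (k + 1) l, w x (j : ZMod (n + 3)))]
  refine Finset.sum_congr rfl fun x _ => ?_
  rw [sum_cast n _ (by simp only [Finset.mem_sdiff, Finset.mem_Icc]; omega) (fun y => w x y)]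
  have hm := rep_mem n
  by_cases hx : k + 1 ≤ rep n x ∧ rep n x ≤ l
  · simp only [Finset.mem_sdiff, Finset.mem_Icc, hx, cutG, hm]
    simp
  · simp only [Finset.mem_Icc, cutG, hx, false_and, if_false, zero_mul,
      Finset.sum_const_zero]

/-- Read `A, B, C, D` as membership of the clockwise vertices `a, b, c, d` in a set of vertices;
the sums count the segments leaving it. -/
lemma cut_resolve {A B C D : Prop} [Decidable A] [Decidable B] [Decidable C] [Decidable D]
    (h1 : ¬ (A ∧ ¬ B ∧ C ∧ ¬ D)) (h2 : ¬ (¬ A ∧ B ∧ ¬ C ∧ D)) :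
    (((if A ∧ ¬ C then 1 else 0) + (if C ∧ ¬ A then 1 else 0)) +
      ((if B ∧ ¬ D then 1 else 0) + (if D ∧ ¬ B then 1 else 0)) : ℤ) =
    max (((if A ∧ ¬ B then 1 else 0) + (if B ∧ ¬ A then 1 else 0)) +
        ((if C ∧ ¬ D then 1 else 0) + (if D ∧ ¬ C then 1 else 0)))
      (((if A ∧ ¬ D then 1 else 0) + (if D ∧ ¬ A then 1 else 0)) +
        ((if B ∧ ¬ C then 1 else 0) + (if C ∧ ¬ B then 1 else 0))) := by
  by_cases hA : A <;> by_cases hB : B <;> by_cases hC : C <;> by_cases hD : D <;>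
    simp [hA, hB, hC, hD] at h1 h2 ⊢

/-- For consecutive vertices the cut of the crossing pair is the larger of the cuts of
the two pairs resolving it. -/
lemma Iseg_resolve (n : ℕ) (w : ZMod (n + 3) → ZMod (n + 3) → ℤ) {a b c d : ZMod (n + 3)}
    (h : Clockwise n a b c d) (k l : ℕ) (hl : l ≤ n + 3) :
    Iseg n w k l = max
      (Iseg n (remPair n w a b c d + segE n a b + segE n c d) k l)
      (Iseg n (remPair n w a b c d + segE n a d + segE n b c) k l) := by
  simp only [Iseg_eq_pairing n _ k l hl, pairing_resolve]
  obtain ⟨h1, h2, h3⟩ := h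
  have hb := rep_sub_cases n b a
  have hc := rep_sub_cases n c a
  have hd := rep_sub_cases n d a
  have := ZMod.val_lt (d - a)
  have := rep_mem n a
  have := rep_mem n b
  have := rep_mem n c
  have := rep_mem n d
  -- an interval of labels does not separate `{a, c}` from `{b, d}`
  have key : ¬ ((k + 1 ≤ rep n a ∧ rep n a ≤ l) ∧ ¬ (k + 1 ≤ rep n b ∧ rep n b ≤ l) ∧
      (k + 1 ≤ rep n c ∧ rep n c ≤ l) ∧ ¬ (k + 1 ≤ rep n d ∧ rep n d ≤ l)) := by omega
  have key' : ¬ (¬ (k + 1 ≤ rep n a ∧ rep n a ≤ l) ∧ (k + 1 ≤ rep n b ∧ rep n b ≤ l) ∧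
      ¬ (k + 1 ≤ rep n c ∧ rep n c ≤ l) ∧ (k + 1 ≤ rep n d ∧ rep n d ≤ l)) := by omega
  have cut : (cutG n k l a c + cutG n k l c a) + (cutG n k l b d + cutG n k l d b) =
      max ((cutG n k l a b + cutG n k l b a) + (cutG n k l c d + cutG n k l d c))
        ((cutG n k l a d + cutG n k l d a) + (cutG n k l b c + cutG n k l c b)) :=
    cut_resolve key key'
  omega

/-! ### The terminating quantity -/

/-- `(d - 1)(N - d - 1)` for a segment cutting the polygon into arcs of lengths `d`, `N - d`;
this vanishes exactly on edges. -/
def spread (n : ℕ) (x y : ZMod (n + 3)) : ℤ :=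
  (((y - x).val : ℤ) - 1) * ((n : ℤ) + 2 - (y - x).val)

/-- The functional, nonnegative on weighted graphs, that decreases when a crossing is resolved. -/
def energy (n : ℕ) (w : ZMod (n + 3) → ZMod (n + 3) → ℤ) : ℤ := pairing n (spread n) w

lemma spread_symm (n : ℕ) {x y : ZMod (n + 3)} (h : x ≠ y) : spread n y x = spread n x y := by
  have h0 : (y - x).val ≠ 0 := by
    rw [Ne, ZMod.val_eq_zero, sub_eq_zero]; exact h.symm
  have h1 := val_sub_cases n x y
  have h2 := val_sub_cases n y x
  have h3 := ZMod.val_lt (x - y)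
  have h3' := ZMod.val_lt (y - x)
  have h4 : ((x - y).val : ℤ) = n + 3 - (y - x).val := by omega
  unfold spread
  rw [h4]; ring

lemma spread_nonneg (n : ℕ) {x y : ZMod (n + 3)} (h : x ≠ y) : 0 ≤ spread n x y := by
  have h0 : (y - x).val ≠ 0 := by
    rw [Ne, ZMod.val_eq_zero, sub_eq_zero]; exact h.symm
  have h1 := ZMod.val_lt (y - x)
  exact mul_nonneg (by omega) (by omega)

lemma spread_edge (n : ℕ) {x y : ZMod (n + 3)} (h : IsEdge n x y) : spread n x y = 0 := by
  have h1 : (1 : ZMod (n + 3)).val = 1 := by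
    have : Fact (1 < n + 3) := ⟨by omega⟩
    exact ZMod.val_one (n + 3)
  have key : ∀ z : ZMod (n + 3), spread n z (z + 1) = 0 := by
    intro z
    simp [spread, h1]
  have hne : (1 : ZMod (n + 3)) ≠ 0 := by
    intro h0; rw [h0] at h1; simp at h1
  rcases h with rfl | rfl
  · rw [← spread_symm n (x := y + 1) (y := y) (by simpa using hne)]
    exact key y
  · exact key x

lemma energy_nonneg (n : ℕ) {w : ZMod (n + 3) → ZMod (n + 3) → ℤ} (hw : IsWG n w) :
    0 ≤ energy n w := by
  unfold energy pairing
  refine Finset.sum_nonneg fun i _ => Finset.sum_nonneg fun j _ => ?_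
  by_cases hij : i = j
  · subst hij; simp [hw.2.1]
  by_cases he : IsEdge n i j
  · simp [spread_edge n he]
  · exact mul_nonneg (spread_nonneg n hij) (hw.2.2 i j ⟨hij, he⟩)

lemma energy_resolve (n : ℕ) (w : ZMod (n + 3) → ZMod (n + 3) → ℤ) {a b c d : ZMod (n + 3)}
    (h : Clockwise n a b c d) :
    energy n (remPair n w a b c d + segE n a b + segE n c d) < energy n w ∧
    energy n (remPair n w a b c d + segE n a d + segE n b c) < energy n w := by
  obtain ⟨hab, hac, had, hbc, hbd, hcd⟩ := h.ne
  simp only [energy, pairing_resolve, spread_symm n hab, spread_symm n hac, spread_symm n had,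
    spread_symm n hbc, spread_symm n hbd, spread_symm n hcd]
  obtain ⟨h1, h2, h3⟩ := h
  have shift : ∀ x y : ZMod (n + 3), (x - a).val < (y - a).val →
      ((y - x).val : ℤ) = (y - a).val - (x - a).val := by
    intro x y hxy
    have := val_sub_cases n (y - a) (x - a)
    rw [sub_sub_sub_cancel_right] at this
    have := ZMod.val_lt (y - x)
    have := ZMod.val_lt (y - a)
    omega
  have e1 := shift b c h2
  have e2 := shift c d h3
  have e3 := shift b d (h2.trans h3)
  have hN := ZMod.val_lt (d - a)
  unfold spread
  rw [e1, e2, e3]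
  generalize (b - a).val = p at *
  generalize (c - a).val = q at *
  generalize (d - a).val = r at *
  zify at h1 h2 h3 hN
  -- the drop is a positive multiple of the product of two opposite arcs between `a, b, c, d`
  have m1 : 0 < ((q : ℤ) - p) * (n + 3 - r) := mul_pos (by linarith) (by linarith)
  have m2 : 0 < (p : ℤ) * (r - q) := mul_pos (by linarith) (by linarith)
  constructor <;> nlinarith

/-! ### Multiplicativity of `I` -/

lemma IsWG.add {n : ℕ} {u v : ZMod (n + 3) → ZMod (n + 3) → ℤ} (hu : IsWG n u)
    (hv : IsWG n v) : IsWG n (u + v) := by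
  refine ⟨fun i j => ?_, fun i => ?_, fun i j h => add_nonneg (hu.2.2 i j h) (hv.2.2 i j h)⟩
  · simp only [Pi.add_apply]; rw [hu.1 i j, hv.1 i j]
  · simp [hu.2.1, hv.2.1]

lemma segE_isWG (n : ℕ) {x y : ZMod (n + 3)} (h : x ≠ y) : IsWG n (segE n x y) := by
  refine ⟨fun i j => ?_, fun i => ?_, fun i j _ => ?_⟩
  · unfold segE
    rw [add_comm]
    simp only [and_comm]
  · have h1 : ¬ (i = x ∧ i = y) := fun ⟨h1, h2⟩ => h (h1.symm.trans h2)
    have h2 : ¬ (i = y ∧ i = x) := fun ⟨h1, h2⟩ => h (h2.symm.trans h1)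
    simp [segE, h1, h2]
  · unfold segE; split_ifs <;> norm_num

lemma remPair_isWG (n : ℕ) {w : ZMod (n + 3) → ZMod (n + 3) → ℤ} (hw : IsWG n w)
    {a b c d : ZMod (n + 3)} (h : Clockwise n a b c d) (hac : 0 < w a c) (hbd : 0 < w b d) :
    IsWG n (remPair n w a b c d) := by
  obtain ⟨nab, nac, nad, nbc, nbd, ncd⟩ := h.ne
  have h1 := segE_isWG n nac
  have h2 := segE_isWG n nbd
  refine ⟨fun i j => ?_, fun i => ?_, fun i j hij => ?_⟩
  · simp only [remPair, Pi.sub_apply]; rw [hw.1 i j, h1.1 i j, h2.1 i j]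
  · simp [remPair, hw.2.1, h1.2.1, h2.2.1]
  · have h0 := hw.2.2 i j hij
    have hca := hw.1 a c
    have hdb := hw.1 b d
    simp only [remPair, Pi.sub_apply, segE]
    by_cases e1 : i = a ∧ j = c
    · obtain ⟨rfl, rfl⟩ := e1; simp [*]; grind
    by_cases e2 : i = c ∧ j = a
    · obtain ⟨rfl, rfl⟩ := e2; simp [*]; grind
    by_cases e3 : i = b ∧ j = d
    · obtain ⟨rfl, rfl⟩ := e3; simp [*]; grind
    by_cases e4 : i = d ∧ j = b
    · obtain ⟨rfl, rfl⟩ := e4; simp [*]; grind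
    simp only [e1, e2, e3, e4, if_false]; omega

lemma coe_denomIG (n : ℕ) (w : ZMod (n + 3) → ZMod (n + 3) → ℤ) :
    (denomIG n w : PlueckerRing n) = ∏ p : Seg n,
      if IsEdge n p.1.1 p.1.2 ∧ p.1.1.val < p.1.2.val then
        Avar n p ^ (-(w p.1.1 p.1.2)).toNat else 1 := by
  unfold denomIG
  rw [Submonoid.coe_finsetProd]
  refine Finset.prod_congr rfl fun p _ => ?_
  split_ifs <;> simp

/-- `I(u + v) = I(u) I(v)`: negative exponents occur only at the invertible edge variables,
where splitting an exponent into its positive and negative parts is harmless. -/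
lemma IG_add (n : ℕ) {u v : ZMod (n + 3) → ZMod (n + 3) → ℤ} (hu : IsWG n u)
    (hv : IsWG n v) : IG n (u + v) = IG n u * IG n v := by
  unfold IG
  rw [Localization.mk_mul, Localization.mk_eq_mk_iff, Localization.r_iff_exists]
  refine ⟨1, ?_⟩
  rw [Submonoid.coe_mul, coe_denomIG, coe_denomIG, coe_denomIG]
  unfold numerIG
  simp only [← Finset.prod_mul_distrib]
  congr 1
  refine Finset.prod_congr rfl fun p _ => ?_
  by_cases hlt : p.1.1.val < p.1.2.val
  · by_cases he : IsEdge n p.1.1 p.1.2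
    · simp only [hlt, he, and_self, if_true, ← pow_add, Pi.add_apply]
      congr 1
      omega
    · have h1 := hu.2.2 p.1.1 p.1.2 ⟨p.2, he⟩
      have h2 := hv.2.2 p.1.1 p.1.2 ⟨p.2, he⟩
      simp only [hlt, he, if_true, false_and, if_false, ← pow_add, Pi.add_apply, one_mul]
      congr 1
      omega
  · simp [hlt]

lemma Avar_symm (n : ℕ) {x y : ZMod (n + 3)} (h : x ≠ y) :
    Avar n ⟨(x, y), h⟩ = Avar n ⟨(y, x), h.symm⟩ := by
  unfold Avar
  rw [Ideal.Quotient.eq]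
  exact Ideal.subset_span (Or.inl ⟨x, y, h, rfl⟩)

lemma Avar_pluecker (n : ℕ) {a b c d : ZMod (n + 3)} (h : Clockwise n a b c d)
    (hac : a ≠ c) (hbd : b ≠ d) (hab : a ≠ b) (hcd : c ≠ d) (had : a ≠ d) (hbc : b ≠ c) :
    Avar n ⟨(a, c), hac⟩ * Avar n ⟨(b, d), hbd⟩ =
      Avar n ⟨(a, b), hab⟩ * Avar n ⟨(c, d), hcd⟩ +
      Avar n ⟨(a, d), had⟩ * Avar n ⟨(b, c), hbc⟩ := by
  unfold Avar
  rw [← map_mul, ← map_mul, ← map_mul, ← map_add, Ideal.Quotient.eq, ← sub_sub]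
  exact Ideal.subset_span (Or.inr ⟨a, b, c, d, hac, hbd, hab, hcd, had, hbc, h, rfl⟩)

lemma segE_comm (n : ℕ) (x y : ZMod (n + 3)) : segE n x y = segE n y x := by
  funext i j
  exact add_comm _ _

lemma numerIG_segE (n : ℕ) {x y : ZMod (n + 3)} (h : x ≠ y) :
    numerIG n (segE n x y) = Avar n ⟨(x, y), h⟩ := by
  -- by symmetry the label of `x` may be taken smaller, so the factor is indexed by `(x, y)`
  wlog hlt : x.val < y.val generalizing x y
  · rw [segE_comm, Avar_symm n h]
    have hne : x.val ≠ y.val := fun e => h (ZMod.val_injective _ e)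
    exact this h.symm (by omega)
  unfold numerIG
  rw [Finset.prod_eq_single ⟨(x, y), h⟩]
  · have h2 : ¬ (x = y ∧ y = x) := fun e => h e.1
    simp [hlt, segE, h2]
  · rintro ⟨⟨i, j⟩, hij⟩ _ hne
    dsimp only
    split_ifs with hl
    · have e1 : ¬ (i = x ∧ j = y) := by
        rintro ⟨rfl, rfl⟩; exact hne rfl
      have e2 : ¬ (i = y ∧ j = x) := by
        rintro ⟨rfl, rfl⟩; omega
      simp [segE, e1, e2]
    · rfl
  · simp

lemma denomIG_segE (n : ℕ) (x y : ZMod (n + 3)) : denomIG n (segE n x y) = 1 := by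
  unfold denomIG
  refine Finset.prod_eq_one fun p _ => ?_
  have h0 : (-(segE n x y p.1.1 p.1.2)).toNat = 0 := by
    unfold segE; split_ifs <;> norm_num
  split_ifs
  · rw [h0, pow_zero]
  · rfl

lemma IG_segE (n : ℕ) {x y : ZMod (n + 3)} (h : x ≠ y) :
    IG n (segE n x y) = algebraMap (PlueckerRing n) (PRing n) (Avar n ⟨(x, y), h⟩) := by
  unfold IG
  rw [numerIG_segE n h, denomIG_segE, Localization.mk_one_eq_algebraMap]

lemma IG_resolve (n : ℕ) {w : ZMod (n + 3) → ZMod (n + 3) → ℤ} {a b c d : ZMod (n + 3)}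
    (h : Clockwise n a b c d) (hr : IsWG n (remPair n w a b c d)) :
    IG n w = IG n (remPair n w a b c d + segE n a b + segE n c d) +
      IG n (remPair n w a b c d + segE n a d + segE n b c) := by
  obtain ⟨hab, hac, had, hbc, hbd, hcd⟩ := h.ne
  have hw : w = remPair n w a b c d + segE n a c + segE n b d := by
    unfold remPair; abel
  have expand : ∀ {x y z t : ZMod (n + 3)} (hxy : x ≠ y) (hzt : z ≠ t),
      IG n (remPair n w a b c d + segE n x y + segE n z t) = IG n (remPair n w a b c d) *
        algebraMap (PlueckerRing n) (PRing n) (Avar n ⟨(x, y), hxy⟩ * Avar n ⟨(z, t), hzt⟩) := by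
    intro x y z t hxy hzt
    rw [IG_add n (hr.add (segE_isWG n hxy)) (segE_isWG n hzt), IG_add n hr (segE_isWG n hxy),
      IG_segE n hxy, IG_segE n hzt, map_mul, mul_assoc]
  conv_lhs => rw [hw]
  rw [expand hac hbd, expand hab hcd, expand had hbc, Avar_pluecker n h hac hbd hab hcd had hbc,
    map_add, mul_add]

/-! ### The induction -/

/-- The conclusion of the theorem for the weight matrix `w`. -/
def HasDecomp (n : ℕ) (w : ZMod (n + 3) → ZMod (n + 3) → ℤ) : Prop :=
    ∃ (r : ℕ) (L : Fin r → (ZMod (n + 3) → ZMod (n + 3) → ℤ)),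
      0 < r ∧ (∀ i, IsWG n (L i)) ∧
      (∀ i, ∀ a b c d, IsDiag n a b → IsDiag n c d →
        L i a b ≠ 0 → L i c d ≠ 0 → ¬ Cross n a b c d) ∧
      IG n w = ∑ i, IG n (L i) ∧
      (∀ i (p : ZMod (n + 3)), Rsum n (L i) p = Rsum n w p) ∧
      ∀ k l : ℕ, 1 ≤ k → k < l → l ≤ n + 3 →
        (∀ i, Iseg n (L i) k l ≤ Iseg n w k l) ∧ ∃ i, Iseg n (L i) k l = Iseg n w k l

lemma HasDecomp.join {n : ℕ} {w u v : ZMod (n + 3) → ZMod (n + 3) → ℤ}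
    (hu : HasDecomp n u) (hv : HasDecomp n v) (hIG : IG n w = IG n u + IG n v)
    (hRu : ∀ p, Rsum n u p = Rsum n w p) (hRv : ∀ p, Rsum n v p = Rsum n w p)
    (hI : ∀ k l : ℕ, l ≤ n + 3 → Iseg n w k l = max (Iseg n u k l) (Iseg n v k l)) :
    HasDecomp n w := by
  obtain ⟨r, L, r0, LW, LC, LI, LR, LM⟩ := hu
  obtain ⟨s, M, s0, MW, MC, MI, MR, MM⟩ := hv
  refine ⟨r + s, Fin.append L M, by omega, ?_, ?_, ?_, ?_, ?_⟩
  · intro i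
    refine Fin.addCases (fun i => ?_) (fun i => ?_) i
    · rw [Fin.append_left]; exact LW i
    · rw [Fin.append_right]; exact MW i
  · intro i
    refine Fin.addCases (fun i => ?_) (fun i => ?_) i
    · rw [Fin.append_left]; exact LC i
    · rw [Fin.append_right]; exact MC i
  · rw [hIG, LI, MI, Fin.sum_univ_add]
    simp only [Fin.append_left, Fin.append_right]
  · intro i
    refine Fin.addCases (fun i => ?_) (fun i => ?_) i
    · rw [Fin.append_left]; exact fun p => (LR i p).trans (hRu p)
    · rw [Fin.append_right]; exact fun p => (MR i p).trans (hRv p)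
  · intro k l hk hkl hl
    obtain ⟨L1, i1, L2⟩ := LM k l hk hkl hl
    obtain ⟨M1, i2, M2⟩ := MM k l hk hkl hl
    rw [hI k l hl]
    constructor
    · intro i
      refine Fin.addCases (fun i => ?_) (fun i => ?_) i
      · rw [Fin.append_left]; exact (L1 i).trans (le_max_left _ _)
      · rw [Fin.append_right]; exact (M1 i).trans (le_max_right _ _)
    · rcases max_choice (Iseg n u k l) (Iseg n v k l) with h | h
      · exact ⟨Fin.castAdd s i1, by rw [Fin.append_left, h, L2]⟩
      · exact ⟨Fin.natAdd r i2, by rw [Fin.append_right, h, M2]⟩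

lemma hasDecomp_of_isWG (n : ℕ) (w : ZMod (n + 3) → ZMod (n + 3) → ℤ) (hw : IsWG n w) :
    HasDecomp n w := by
  induction hm : (energy n w).toNat using Nat.strong_induction_on generalizing w with
  | _ m ih =>
  subst hm
  by_cases hc : ∃ a b c d, Clockwise n a b c d ∧ 0 < w a c ∧ 0 < w b d
  · obtain ⟨a, b, c, d, h, hac, hbd⟩ := hc
    have hr := remPair_isWG n hw h hac hbd
    obtain ⟨nab, nac, nad, nbc, nbd, ncd⟩ := h.ne
    have W1 := (hr.add (segE_isWG n nab)).add (segE_isWG n ncd)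
    have W2 := (hr.add (segE_isWG n nad)).add (segE_isWG n nbc)
    obtain ⟨E1, E2⟩ := energy_resolve n w h
    have P1 := energy_nonneg n W1
    have P2 := energy_nonneg n W2
    refine (ih _ (by omega) _ W1 rfl).join (ih _ (by omega) _ W2 rfl) (IG_resolve n h hr) ?_ ?_
      (fun k l hl => Iseg_resolve n w h k l hl)
    · intro p
      simp only [Rsum_eq_pairing, pairing_resolve]
      ring
    · intro p
      simp only [Rsum_eq_pairing, pairing_resolve]
      ring
  · refine ⟨1, fun _ => w, one_pos, fun _ => hw, ?_, by simp, fun _ _ => rfl,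
      fun k l _ _ _ => ⟨fun _ => le_rfl, 0, rfl⟩⟩
    intro _ a b c d hab hcd wab wcd hx
    have pab := lt_of_le_of_ne (hw.2.2 a b hab) wab.symm
    have pcd := lt_of_le_of_ne (hw.2.2 c d hcd) wcd.symm
    rcases hx with hx | hx
    · exact hc ⟨a, c, b, d, hx, pab, pcd⟩
    · exact hc ⟨a, d, b, c, hx, pab, by rwa [hw.1 d c]⟩

set_option synthInstance.maxHeartbeats 1000000 in
/-- Every product `I(G)` decomposes as a finite sum of elements `I(L_i)` of the
canonical basis (weighted graphs with pairwise non-crossing positively-weighted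
diagonals), with `R_p(L_i) = R_p(G)` for all `p` and
`I_{kl}(G) = max_i I_{kl}(L_i)` for every segment `{kl}`. -/
theorem IG_decomposition_into_canonical_basis
    (n : ℕ) (hn : 1 ≤ n)
    (w : ZMod (n + 3) → ZMod (n + 3) → ℤ) (hw : IsWG n w) :
    ∃ (r : ℕ) (L : Fin r → (ZMod (n + 3) → ZMod (n + 3) → ℤ)),
      0 < r ∧ (∀ i, IsWG n (L i)) ∧
      (∀ i, ∀ a b c d, IsDiag n a b → IsDiag n c d →
        L i a b ≠ 0 → L i c d ≠ 0 → ¬ Cross n a b c d) ∧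
      IG n w = ∑ i, IG n (L i) ∧
      (∀ i (p : ZMod (n + 3)), Rsum n (L i) p = Rsum n w p) ∧
      ∀ k l : ℕ, 1 ≤ k → k < l → l ≤ n + 3 →
        (∀ i, Iseg n (L i) k l ≤ Iseg n w k l) ∧ ∃ i, Iseg n (L i) k l = Iseg n w k l := by
  exact hasDecomp_of_isWG n w hw
end

section
/- For every complete triangulation T of the N-gon, the map φ_T sending an A-lamination G over ℝ to the tuple ( (1/2)·I_{ij}(G) )_{{ij}∈T} ∈ ℝ^T is a bijection from the set of A-laminations over ℝ onto ℝ^T. -/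
/-!
Half the cut function `x k l = Icyc w k l / 2` of a lamination `w` is a tropical point, and `w` is
recovered from it; so the theorem reduces to the fact that a tropical point is determined by its
values on a triangulation, which can be prescribed arbitrarily.

*From laminations to tropical points.* If `w` is symmetric with zero row sums, then
`Icyc w k l = 2 S k l - S k k - S l l`, where `S` sums `w` over pairs of initial segments of the
vertex list (`Icyc_eq_prefixSum`). Hence `x p r + x q s - x q r - x p s` is the total weight
joining the arcs `(p, q]` and `(r, s]` (`Icyc_rect`). For one-element arcs this says that `w` is
the mixed second difference of `x` (`weight_eq`), and conversely every symmetric `x` vanishing on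
the diagonal and on edges is half the cut function of its second difference
(`half_Icyc_secondDiff`). For `p, q, r, s` in clockwise order, the two differences
`x p r + x q s - x q r - x p s` and `x p r + x q s - x p q - x r s` are the weights joining the two
pairs of opposite arcs. The tropical Plücker relation says that both are nonnegative and one of them
vanishes. For laminations this holds because segments joining one pair of opposite arcs cross those
joining the other pair (`Lam.pluecker`); conversely it yields nonnegativity and noncrossing of the
second difference (`secondDiff_nonneg`, `secondDiff_noncross`).

*Tropical points and triangulations.* A triangulation, with the edges of the `m`-gon included, is a
noncrossing set of `2m - 3` segments. A counting argument shows that it has an ear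
(`NonCrossing.exists_ear`), that is, a vertex `v` whose only segments go to its neighbours `u, t`,
with `(u, t)` in the triangulation. Induct by cutting off `v`: the Plücker relation for
`v, t, a, u` forces `x v a = max (x v u + x t a) (x v t + x u a) - x u t`, which gives uniqueness
(`Pluecker.unique`); and with this definition all Plücker relations involving `v` follow from those
of the smaller polygon (`ear_relation`), which gives existence (`Pluecker.exists_extension`).
-/

open Finset

/-- `L(ℝ)`: the set of `ℝ`-tropical points of the cluster `A`-variety of type `Aₙ`
in its coordinate model: symmetric real functions on pairs of vertices, vanishing on
the diagonal and on edges, satisfying the tropical Plücker relations. -/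
structure TropPt (n : ℕ) where
  x : ZMod (n + 3) → ZMod (n + 3) → ℝ
  symm : ∀ i j, x i j = x j i
  diag_zero : ∀ i, x i i = 0
  edge_zero : ∀ i j, IsEdge n i j → x i j = 0
  pluecker : ∀ p q r s, Clockwise n p q r s →
    x p r + x q s = max (x p q + x r s) (x q r + x p s)

/-- A partial triangulation: a set of pairwise non-crossing diagonals. -/
structure PartialTri (n : ℕ) where
  diags : Finset (Sym2 (ZMod (n + 3)))
  mem_isDiag : ∀ i j, s(i, j) ∈ diags → IsDiag n i j
  noncross : ∀ i j k l, s(i, j) ∈ diags → s(k, l) ∈ diags → ¬ Cross n i j k l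

/-- The diagonal `{i j}` belongs to the supplement `S(T)`: it is not in `T` and
`T ∪ {i j}` is again a partial triangulation. -/
def InSupp (n : ℕ) (T : PartialTri n) (i j : ZMod (n + 3)) : Prop :=
  IsDiag n i j ∧ s(i, j) ∉ T.diags ∧
    ∀ k l, s(k, l) ∈ T.diags → ¬ Cross n i j k l ∧ ¬ Cross n k l i j

/-- The face `F_c^T` of a partial triangulation `T`. -/
def Face (n : ℕ) (T : PartialTri n) (c : ZMod (n + 3) → ZMod (n + 3) → ℝ) :
    Set (TropPt n) :=
  {x | (∀ i j, s(i, j) ∈ T.diags → x.x i j = c i j) ∧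
       (∀ i j, InSupp n T i j → x.x i j ≤ c i j)}

/-- The polytope `F_c^∅ = {x ∈ L(ℝ) : x_{ij} ≤ c_{ij} for all diagonals}`. -/
def TropPoly (n : ℕ) (c : ZMod (n + 3) → ZMod (n + 3) → ℝ) : Set (TropPt n) :=
  {x | ∀ i j, IsDiag n i j → x.x i j ≤ c i j}

/-- `F_c^∅` is a Stasheff polytope: faces reverse inclusions of partial triangulations. -/
def IsStasheff (n : ℕ) (c : ZMod (n + 3) → ZMod (n + 3) → ℝ) : Prop :=
  ∀ T₁ T₂ : PartialTri n, T₁.diags ⊆ T₂.diags → Face n T₂ c ⊆ Face n T₁ c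

/-- A tropicalized cluster monomial: `F(x) = Σ_{{ij}∈T} n_{ij} x_{ij}` for some complete
triangulation `T` and nonnegative integers `n_{ij}` (each unordered pair is counted once,
whence the factor `1/2` in the symmetric double sum). -/
def IsClusterMono (n : ℕ) (F : TropPt n → ℝ) : Prop :=
  ∃ (T : PartialTri n) (m : ZMod (n + 3) → ZMod (n + 3) → ℕ),
    T.diags.card = n ∧ (∀ i j, m i j = m j i) ∧
    (∀ i j, s(i, j) ∉ T.diags → m i j = 0) ∧
    ∀ x : TropPt n, F x =
      (1 / 2) * ∑ i : ZMod (n + 3), ∑ j : ZMod (n + 3), (m i j : ℝ) * x.x i j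

/-- The cyclic interval `{k+1, …, l}` of vertices (empty when `k = l`). -/
def cycInt (n : ℕ) (k l : ZMod (n + 3)) : Finset (ZMod (n + 3)) :=
  Finset.univ.filter fun v => 1 ≤ (v - k).val ∧ (v - k).val ≤ (l - k).val

/-- `I_{kl}(w) = Σ_{a∈I, b∉I} w_{ab}` where `I = {k+1,…,l}` is the cyclic interval;
in particular `I_{kk}(w) = 0`. -/
def Icyc (n : ℕ) {M : Type*} [AddCommMonoid M]
    (w : ZMod (n + 3) → ZMod (n + 3) → M) (k l : ZMod (n + 3)) : M :=
  ∑ a ∈ cycInt n k l, ∑ b ∈ (cycInt n k l)ᶜ, w a b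

/-- An `A`-lamination on the `(n+3)`-gon over `ℝ`: a symmetric real matrix with zero
diagonal, nonnegative on diagonals, no two crossing diagonals both of nonzero weight,
and all row sums `R_p` equal to zero. -/
structure Lam (n : ℕ) where
  w : ZMod (n + 3) → ZMod (n + 3) → ℝ
  symm : ∀ i j, w i j = w j i
  diag_zero : ∀ i, w i i = 0
  nonneg : ∀ i j, IsDiag n i j → 0 ≤ w i j
  noncross : ∀ i j k l, IsDiag n i j → IsDiag n k l → Cross n i j k l →
    w i j = 0 ∨ w k l = 0
  balanced : ∀ p, ∑ j, w p j = 0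

/-! ### Noncrossing pairs and ears -/

/-- `P` is a set of noncrossing segments `(i, j)`, `i < j`, with endpoints in the vertex set `S`
of a convex polygon whose cyclic order is induced by the order of `ℕ`. Edges of the polygon are
allowed as members of `P`. -/
structure NonCrossing (S : Finset ℕ) (P : Finset (ℕ × ℕ)) : Prop where
  mem : ∀ e ∈ P, e.1 ∈ S ∧ e.2 ∈ S ∧ e.1 < e.2
  nc : ∀ e ∈ P, ∀ f ∈ P, ¬ (e.1 < f.1 ∧ f.1 < e.2 ∧ e.2 < f.2)

/-- Some vertex `v` with neighbours `u < v < t` meets no segment of `P` except possibly the two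
edges `(u, v)` and `(v, t)`: any vertex cut off by a shortest segment compatible with `P` will
do. -/
lemma NonCrossing.exists_free {S : Finset ℕ} {P : Finset (ℕ × ℕ)} (h : NonCrossing S P)
    (hS : 3 ≤ S.card) :
    ∃ u ∈ S, ∃ v ∈ S, ∃ t ∈ S, u < v ∧ v < t ∧ (∀ a ∈ S, a ≤ u ∨ a = v ∨ t ≤ a) ∧
      ∀ e ∈ P, (e.1 = v → e.2 = t) ∧ (e.2 = v → e.1 = u) := by
  classical
  let C : ℕ → Prop := fun m => ∃ i ∈ S, ∃ j ∈ S, ∃ v ∈ S, i < v ∧ v < j ∧ j - i = m ∧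
    ∀ e ∈ P, ¬ (e.1 < i ∧ i < e.2 ∧ e.2 < j) ∧ ¬ (i < e.1 ∧ e.1 < j ∧ j < e.2)
  have hne : S.Nonempty := Finset.card_pos.1 (by omega)
  -- the segment joining the extreme vertices is compatible with everything
  have hex : ∃ m, C m := by
    obtain ⟨v, hv, hvm⟩ : ∃ v ∈ S, v ∉ ({S.min' hne, S.max' hne} : Finset ℕ) := by
      by_contra! hcon
      have h1 := Finset.card_le_card (show S ⊆ {S.min' hne, S.max' hne} from hcon)
      have h2 := Finset.card_le_two (a := S.min' hne) (b := S.max' hne)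
      omega
    simp only [Finset.mem_insert, Finset.mem_singleton, not_or] at hvm
    have h1 := S.min'_le v hv
    have h2 := S.le_max' v hv
    refine ⟨_, S.min' hne, S.min'_mem hne, S.max' hne, S.max'_mem hne, v, hv, by omega, by omega,
      rfl, fun e he => ?_⟩
    obtain ⟨he1, he2, -⟩ := h.mem e he
    have h3 := S.min'_le _ he1
    have h4 := S.le_max' _ he2
    omega
  obtain ⟨i, hi, j, hj, v, hv, hiv, hvj, hm, hc⟩ := Nat.find_spec hex
  have hmin : ∀ k, C k → j - i ≤ k := fun k hk => hm ▸ Nat.find_min' hex hk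
  have hn1 : (S.filter (· < v)).Nonempty := ⟨i, by simp [hi, hiv]⟩
  have hn2 : (S.filter (v < ·)).Nonempty := ⟨j, by simp [hj, hvj]⟩
  obtain ⟨u, hu, hu'⟩ := Finset.exists_max_image _ id hn1
  obtain ⟨t, ht, ht'⟩ := Finset.exists_min_image _ id hn2
  simp only [Finset.mem_filter, id, and_imp] at hu hu' ht ht'
  refine ⟨u, hu.1, v, hv, t, ht.1, hu.2, ht.2, fun a ha => ?_, fun e he => ⟨fun hev => ?_,
    fun hev => ?_⟩⟩
  · rcases lt_trichotomy a v with h1 | h1 | h1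
    · exact Or.inl (hu' a ha h1)
    · exact Or.inr (Or.inl h1)
    · exact Or.inr (Or.inr (ht' a ha h1))
  all_goals
    obtain ⟨he1, he2, hlt⟩ := h.mem e he
    have hce := hc e he
    by_contra hne'
  · have h1 := ht' e.2 he2 (by omega)
    have h2 := hmin (e.2 - e.1) ⟨e.1, he1, e.2, he2, t, ht.1, by omega, by omega, rfl,
      fun f hf => ⟨h.nc f hf e he, h.nc e he f hf⟩⟩
    omega
  · have h1 := hu' e.1 he1 (by omega)
    have h2 := hmin (e.2 - e.1) ⟨e.1, he1, e.2, he2, u, hu.1, by omega, by omega, rfl,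
      fun f hf => ⟨h.nc f hf e he, h.nc e he f hf⟩⟩
    omega

lemma NonCrossing.erase {S : Finset ℕ} {P : Finset (ℕ × ℕ)} (h : NonCrossing S P) (v : ℕ) :
    NonCrossing (S.erase v) (P.filter fun e => e.1 ≠ v ∧ e.2 ≠ v) := by
  constructor
  · intro e he
    simp only [Finset.mem_filter] at he
    obtain ⟨h1, h2, h3⟩ := h.mem e he.1
    exact ⟨Finset.mem_erase.2 ⟨he.2.1, h1⟩, Finset.mem_erase.2 ⟨he.2.2, h2⟩, h3⟩
  · intro e he f hf
    exact h.nc e (Finset.mem_filter.1 he).1 f (Finset.mem_filter.1 hf).1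

/-- A noncrossing set of segments in an `m`-gon, edges included, has at most `2m - 3` elements. -/
lemma NonCrossing.card_le (m : ℕ) : ∀ {S : Finset ℕ} {P : Finset (ℕ × ℕ)}, NonCrossing S P →
    S.card = m + 2 → P.card + 3 ≤ 2 * S.card := by
  induction m with
  | zero =>
    intro S P h hS
    obtain ⟨a, b, hab, rfl⟩ := Finset.card_eq_two.1 hS
    have hsub : P ⊆ {(min a b, max a b)} := by
      intro e he
      obtain ⟨h1, h2, h3⟩ := h.mem e he
      simp only [Finset.mem_insert, Finset.mem_singleton] at h1 h2
      rw [Finset.mem_singleton]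
      ext <;> simp only <;> omega
    have := Finset.card_le_card hsub
    rw [Finset.card_singleton] at this
    omega
  | succ m ih =>
    intro S P h hS
    obtain ⟨u, hu, v, hv, t, ht, huv, hvt, hcons, hfree⟩ := h.exists_free (by omega)
    have hcard := Finset.card_erase_of_mem hv
    have h1 := ih (h.erase v) (by omega)
    have hsub : P ⊆ insert (u, v) (insert (v, t) (P.filter fun e => e.1 ≠ v ∧ e.2 ≠ v)) := by
      intro e he
      simp only [Finset.mem_insert, Finset.mem_filter, Prod.ext_iff]
      have := hfree e he
      tauto
    have h2 := Finset.card_le_card hsub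
    have h3 := Finset.card_insert_le (u, v) (insert (v, t) (P.filter fun e => e.1 ≠ v ∧ e.2 ≠ v))
    have h4 := Finset.card_insert_le (v, t) (P.filter fun e => e.1 ≠ v ∧ e.2 ≠ v)
    omega

/-- A triangulation with at least three vertices has an ear `u < v < t`, and cutting it off leaves
a triangulation. -/
lemma NonCrossing.exists_ear {S : Finset ℕ} {P : Finset (ℕ × ℕ)} (h : NonCrossing S P)
    (hS : 3 ≤ S.card) (hP : P.card + 3 = 2 * S.card) :
    ∃ u ∈ S, ∃ v ∈ S, ∃ t ∈ S, u < v ∧ v < t ∧ (∀ a ∈ S, a ≤ u ∨ a = v ∨ t ≤ a) ∧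
      (∀ e ∈ P, (e.1 = v → e.2 = t) ∧ (e.2 = v → e.1 = u)) ∧
      (u, v) ∈ P ∧ (v, t) ∈ P ∧ (u, t) ∈ P ∧
      (P.filter fun e => e.1 ≠ v ∧ e.2 ≠ v).card + 3 = 2 * (S.erase v).card := by
  obtain ⟨u, hu, v, hv, t, ht, huv, hvt, hcons, hfree⟩ := h.exists_free hS
  have hcard := Finset.card_erase_of_mem hv
  refine ⟨u, hu, v, hv, t, ht, huv, hvt, hcons, hfree, ?_⟩
  have hE := h.erase v
  generalize hP' : P.filter (fun e => e.1 ≠ v ∧ e.2 ≠ v) = P' at hE ⊢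
  have h1 := NonCrossing.card_le (S.card - 3) hE (by omega)
  have hsub : P ⊆ insert (u, v) (insert (v, t) P') := by
    intro e he
    simp only [← hP', Finset.mem_insert, Finset.mem_filter, Prod.ext_iff]
    have := hfree e he
    tauto
  have h2 := Finset.card_le_card hsub
  have h3 := Finset.card_insert_le (u, v) (insert (v, t) P')
  have h4 := Finset.card_insert_le (v, t) P'
  have huvP : (u, v) ∈ P := by
    by_contra hn
    have := Finset.card_le_card ((Finset.subset_insert_iff_of_notMem hn).1 hsub)
    omega
  have hvtP : (v, t) ∈ P := by
    by_contra hn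
    rw [Finset.insert_comm] at hsub
    have := Finset.card_le_card ((Finset.subset_insert_iff_of_notMem hn).1 hsub)
    have := Finset.card_insert_le (u, v) P'
    omega
  refine ⟨huvP, hvtP, ?_, by omega⟩
  -- `(u, t)` is an edge of the remaining polygon, so it could be added to `P'` if it were missing
  by_contra hn
  have hnc : NonCrossing (S.erase v) (insert (u, t) P') := by
    constructor
    · intro e he
      rcases Finset.mem_insert.1 he with rfl | he
      · exact ⟨Finset.mem_erase.2 ⟨by omega, hu⟩, Finset.mem_erase.2 ⟨by omega, ht⟩, by
          simp only; omega⟩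
      · exact hE.mem e he
    · intro e he f hf
      rcases Finset.mem_insert.1 he with rfl | he <;> rcases Finset.mem_insert.1 hf with rfl | hf
      · simp only; omega
      · obtain ⟨h5, h6, h7⟩ := hE.mem f hf
        rw [Finset.mem_erase] at h5 h6
        have := hcons _ h5.2
        simp only; omega
      · obtain ⟨h5, h6, h7⟩ := hE.mem e he
        rw [Finset.mem_erase] at h5 h6
        have := hcons _ h6.2
        simp only; omega
      · exact hE.nc e he f hf
  have h5 := NonCrossing.card_le (S.card - 3) hnc (by omega)
  rw [Finset.card_insert_of_notMem (fun hm => hn (Finset.mem_filter.1 (hP' ▸ hm)).1)] at h5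
  omega

/-! ### Tropical Plücker relations on a triangulated polygon -/

/-- The tropical Plücker relations for all quadruples of vertices in `S`. -/
def Pluecker (S : Finset ℕ) (x : ℕ → ℕ → ℝ) : Prop :=
  ∀ p ∈ S, ∀ q ∈ S, ∀ r ∈ S, ∀ s ∈ S, p < q → q < r → r < s →
    x p r + x q s = max (x p q + x r s) (x q r + x p s)

/-- `p, q, r, s` are distinct and in cyclic order. -/
def CycOrd (p q r s : ℕ) : Prop :=
  (p < q ∧ q < r ∧ r < s) ∨ (q < r ∧ r < s ∧ s < p) ∨ (r < s ∧ s < p ∧ p < q) ∨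
    (s < p ∧ p < q ∧ q < r)

/-- For symmetric `x`, the tropical Plücker relation is invariant under cyclic rotation. -/
lemma pluecker_rotate {α : Type*} {x : α → α → ℝ} (hx : ∀ i j, x i j = x j i) {p q r s : α}
    (h : x q s + x r p = max (x q r + x s p) (x r s + x q p)) :
    x p r + x q s = max (x p q + x r s) (x q r + x p s) := by
  rw [add_comm, hx p r, h, max_comm, add_comm (x r s), hx q p, hx s p]

lemma Pluecker.cyc {S : Finset ℕ} {x : ℕ → ℕ → ℝ} (h : Pluecker S x)
    (hx : ∀ i j, x i j = x j i) {p q r s : ℕ} (hp : p ∈ S) (hq : q ∈ S) (hr : r ∈ S)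
    (hs : s ∈ S) (hc : CycOrd p q r s) :
    x p r + x q s = max (x p q + x r s) (x q r + x p s) := by
  have hrot : ∀ {p q r s : ℕ}, x q s + x r p = max (x q r + x s p) (x r s + x q p) →
      x p r + x q s = max (x p q + x r s) (x q r + x p s) := pluecker_rotate hx
  rcases hc with ⟨h1, h2, h3⟩ | ⟨h1, h2, h3⟩ | ⟨h1, h2, h3⟩ | ⟨h1, h2, h3⟩
  · exact h p hp q hq r hr s hs h1 h2 h3
  · exact hrot (h q hq r hr s hs p hp h1 h2 h3)
  · exact hrot (hrot (h r hr s hs p hp q hq h1 h2 h3))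
  · exact hrot (hrot (hrot (h s hs p hp q hq r hr h1 h2 h3)))

/-- A solution of the tropical Plücker relations is determined by its values on a
triangulation: the values at an ear follow from those on the rest of the polygon. -/
lemma Pluecker.unique (m : ℕ) : ∀ {S : Finset ℕ} {P : Finset (ℕ × ℕ)}, NonCrossing S P →
    S.card = m + 2 → P.card + 3 = 2 * S.card → ∀ {x y : ℕ → ℕ → ℝ},
    (∀ i j, x i j = x j i) → (∀ i j, y i j = y j i) → Pluecker S x → Pluecker S y →
    (∀ e ∈ P, x e.1 e.2 = y e.1 e.2) → ∀ i ∈ S, ∀ j ∈ S, i ≠ j → x i j = y i j := by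
  induction m with
  | zero =>
    intro S P h hS hP x y hx hy _ _ he i hi j hj hij
    obtain ⟨e, heP⟩ : P.Nonempty := Finset.card_pos.1 (by omega)
    obtain ⟨h1, h2, h3⟩ := h.mem e heP
    have hval := he e heP
    obtain ⟨a, b, hab, rfl⟩ := Finset.card_eq_two.1 hS
    simp only [Finset.mem_insert, Finset.mem_singleton] at h1 h2 hi hj
    have : (i = e.1 ∧ j = e.2) ∨ (i = e.2 ∧ j = e.1) := by omega
    rcases this with ⟨rfl, rfl⟩ | ⟨rfl, rfl⟩
    · exact hval
    · rw [hx, hy, hval]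
  | succ m ih =>
    intro S P h hS hP x y hx hy hpx hpy he
    obtain ⟨u, hu, v, hv, t, ht, huv, hvt, hcons, hfree, h1, h2, h3, h4⟩ :=
      h.exists_ear (by omega) hP
    have hcard := Finset.card_erase_of_mem hv
    have hrest := ih (h.erase v) (by omega) h4 hx hy
      (fun p hp q hq r hr s hs => hpx p (Finset.mem_of_mem_erase hp) q (Finset.mem_of_mem_erase hq)
        r (Finset.mem_of_mem_erase hr) s (Finset.mem_of_mem_erase hs))
      (fun p hp q hq r hr s hs => hpy p (Finset.mem_of_mem_erase hp) q (Finset.mem_of_mem_erase hq)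
        r (Finset.mem_of_mem_erase hr) s (Finset.mem_of_mem_erase hs))
      (fun e h => he e (Finset.mem_filter.1 h).1)
    have e1 := he _ h1
    have e2 := he _ h2
    have e3 := he _ h3
    simp only at e1 e2 e3
    have key : ∀ a ∈ S, a ≠ v → x v a = y v a := by
      intro a ha hav
      by_cases hau : a = u
      · rw [hau, hx, hy, e1]
      by_cases hat : a = t
      · rw [hat, e2]
      have hc : CycOrd v t a u := by have := hcons a ha; unfold CycOrd; omega
      have hX := hpx.cyc hx hv ht ha hu hc
      have hY := hpy.cyc hy hv ht ha hu hc
      have e4 := hrest t (by simp [ht]; omega) a (by simp [ha, hav]) (by omega)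
      have e5 := hrest a (by simp [ha, hav]) u (by simp [hu]; omega) (by omega)
      rw [hx t u, hx v u, e1, e2, e3, e4, e5] at hX
      rw [hy t u, hy v u] at hY
      linarith
    intro i hi j hj hij
    by_cases hiv : i = v
    · subst hiv; exact key j hj (by omega)
    by_cases hjv : j = v
    · subst hjv; rw [hx, hy]; exact key i hi hiv
    exact hrest i (by simp [hi, hiv]) j (by simp [hj, hjv]) hij

lemma eq_max_iff_le {A B C : ℝ} : A = max B C ↔ B ≤ A ∧ C ≤ A ∧ (A = B ∨ A = C) := by
  constructor
  · rintro rfl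
    exact ⟨le_max_left _ _, le_max_right _ _, max_choice B C⟩
  · rintro ⟨h1, h2, rfl | rfl⟩
    · rw [max_eq_left h2]
    · rw [max_eq_right h1]

/-- The key step of the extension: `f`, extended to an additional vertex `v` between `u` and `t`
by the Plücker relations of the quadruples `(v, t, b, u)`, satisfies every Plücker relation
involving `v`. -/
lemma ear_relation {f : ℕ → ℕ → ℝ} (hf : ∀ i j, f i j = f j i) {S : Finset ℕ} {u v t : ℕ}
    (hu : u ∈ S) (ht : t ∈ S) (huv : u < v) (hvt : v < t) (hcons : ∀ a ∈ S, a ≤ u ∨ t ≤ a)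
    (hpl : Pluecker S f) (α β : ℝ) (g : ℕ → ℝ) (hgu : g u = α) (hgt : g t = β)
    (hg : ∀ b ∈ S, b ≠ u → b ≠ t → g b + f u t = max (α + f t b) (β + f u b))
    {a b d : ℕ} (ha : a ∈ S) (hb : b ∈ S) (hd : d ∈ S) (hc : CycOrd v a b d) :
    g b + f a d = max (g a + f b d) (f a b + g d) := by
  have ca := hcons a ha
  have cb := hcons b hb
  have cd := hcons d hd
  unfold CycOrd at hc
  have hgb := hg b hb (by omega) (by omega)
  rw [eq_max_iff_le] at hgb ⊢
  obtain ⟨hb1, hb2, hb3⟩ := hgb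
  by_cases hat : a = t
  · subst hat
    by_cases hdu : d = u
    · subst hdu
      rw [hgt, hgu, hf a d, hf b d]
      refine ⟨by linarith, by linarith, hb3.symm.imp (by intro; linarith) (by intro; linarith)⟩
    · have hgd := hg d hd hdu (by omega)
      have hp := hpl.cyc hf ha hb hd hu (by unfold CycOrd; omega)
      rw [hf d u, hf a u, hf b u] at hp
      rw [eq_max_iff_le] at hgd hp
      rw [hgt]
      obtain ⟨hd1, hd2, hd3⟩ := hgd
      obtain ⟨hp1, hp2, hp3⟩ := hp
      refine ⟨by linarith, by rcases hd3 with h | h <;> linarith, ?_⟩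
      rcases hb3 with h | h
      · right; rcases hd3 with h' | h' <;> linarith
      · rcases hp3 with h' | h'
        · right; rcases hd3 with h'' | h'' <;> linarith
        · left; linarith
  · have hga := hg a ha (by omega) hat
    have hp := hpl.cyc hf ht ha hb hd (by unfold CycOrd; omega)
    rw [eq_max_iff_le] at hga hp
    obtain ⟨ha1, ha2, ha3⟩ := hga
    obtain ⟨hp1, hp2, hp3⟩ := hp
    by_cases hdu : d = u
    · subst hdu
      rw [hgu]
      rw [hf t d, hf a d, hf b d] at *
      refine ⟨by rcases ha3 with h | h <;> linarith, by linarith, ?_⟩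
      rcases hb3 with h | h
      · rcases hp3 with h' | h'
        · left; rcases ha3 with h'' | h'' <;> linarith
        · right; linarith
      · left; rcases ha3 with h'' | h'' <;> linarith
    · have hgd := hg d hd hdu (by omega)
      have hq := hpl.cyc hf ha hb hd hu (by unfold CycOrd; omega)
      rw [hf d u, hf a u, hf b u] at hq
      rw [eq_max_iff_le] at hgd hq
      obtain ⟨hd1, hd2, hd3⟩ := hgd
      obtain ⟨hq1, hq2, hq3⟩ := hq
      refine ⟨by rcases ha3 with h | h <;> linarith, by rcases hd3 with h | h <;> linarith, ?_⟩
      rcases hb3 with h | h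
      · rcases hp3 with h' | h'
        · left; rcases ha3 with h'' | h'' <;> linarith
        · right; rcases hd3 with h'' | h'' <;> linarith
      · rcases hq3 with h' | h'
        · right; rcases hd3 with h'' | h'' <;> linarith
        · left; rcases ha3 with h'' | h'' <;> linarith

/-- Any real values on a triangulation extend to a solution of the tropical Plücker relations. -/
lemma Pluecker.exists_extension (m : ℕ) : ∀ {S : Finset ℕ} {P : Finset (ℕ × ℕ)},
    NonCrossing S P → S.card = m + 2 → P.card + 3 = 2 * S.card → ∀ c : ℕ → ℕ → ℝ,
    ∃ x : ℕ → ℕ → ℝ, (∀ i j, x i j = x j i) ∧ Pluecker S x ∧ ∀ e ∈ P, x e.1 e.2 = c e.1 e.2 := by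
  induction m with
  | zero =>
    intro S P h hS hP c
    refine ⟨fun i j => c (min i j) (max i j), fun i j => by
      simp only [min_comm i, max_comm i], ?_, ?_⟩
    · intro p hp q hq r hr s hs h1 h2 h3
      obtain ⟨a, b, hab, rfl⟩ := Finset.card_eq_two.1 hS
      simp only [Finset.mem_insert, Finset.mem_singleton] at hp hq hr hs
      omega
    · intro e he
      have := (h.mem e he).2.2
      simp only [min_eq_left this.le, max_eq_right this.le]
  | succ m ih =>
    intro S P h hS hP c
    obtain ⟨u, hu, v, hv, t, ht, huv, hvt, hcons, hfree, h1, h2, h3, h4⟩ :=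
      h.exists_ear (by omega) hP
    have hcard := Finset.card_erase_of_mem hv
    obtain ⟨f, hf, hpl, hfc⟩ := ih (h.erase v) (by omega) h4 c
    let g : ℕ → ℝ := fun b => if b = u then c u v else if b = t then c v t else
      max (c u v + f t b) (c v t + f u b) - f u t
    let x : ℕ → ℕ → ℝ := fun a b => if a = v then g b else if b = v then g a else f a b
    have hx : ∀ a b, x a b = x b a := by
      intro a b
      simp only [x]
      split_ifs with h5 h6 h6
      · rw [h5, h6]
      · rfl
      · rfl
      · exact hf a b
    have hxv : ∀ b, x v b = g b := fun b => by simp [x]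
    have hxf : ∀ a b, a ≠ v → b ≠ v → x a b = f a b := fun a b ha hb => by simp [x, ha, hb]
    have hrel : ∀ a ∈ S, ∀ b ∈ S, ∀ d ∈ S, CycOrd v a b d →
        x v b + x a d = max (x v a + x b d) (x a b + x v d) := by
      intro a ha b hb d hd hc
      have hc' := hc
      unfold CycOrd at hc'
      rw [hxv, hxv, hxv, hxf a d (by omega) (by omega), hxf b d (by omega) (by omega),
        hxf a b (by omega) (by omega)]
      refine ear_relation hf (S := S.erase v) (u := u) (v := v) (t := t) ?_ ?_ huv hvt ?_ hpl
        (c u v) (c v t) g ?_ ?_ ?_ ?_ ?_ ?_ hc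
      · simp [hu]; omega
      · simp [ht]; omega
      · intro a ha
        rw [Finset.mem_erase] at ha
        have := hcons a ha.2
        omega
      · simp [g]
      · have : t ≠ u := by omega
        simp [g, this]
      · intro b _ hbu hbt
        simp [g, hbu, hbt]
      · simp [ha]; omega
      · simp [hb]; omega
      · simp [hd]; omega
    have hrot : ∀ {p q r s : ℕ}, x q s + x r p = max (x q r + x s p) (x r s + x q p) →
        x p r + x q s = max (x p q + x r s) (x q r + x p s) := pluecker_rotate hx
    refine ⟨x, hx, ?_, ?_⟩
    · intro p hp q hq r hr s hs hpq hqr hrs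
      by_cases hpv : p = v
      · subst hpv
        exact hrel q hq r hr s hs (by unfold CycOrd; omega)
      by_cases hqv : q = v
      · subst hqv
        exact hrot (hrel r hr s hs p hp (by unfold CycOrd; omega))
      by_cases hrv : r = v
      · subst hrv
        exact hrot (hrot (hrel s hs p hp q hq (by unfold CycOrd; omega)))
      by_cases hsv : s = v
      · subst hsv
        exact hrot (hrot (hrot (hrel p hp q hq r hr (by unfold CycOrd; omega))))
      rw [hxf p r hpv hrv, hxf q s hqv hsv, hxf p q hpv hqv, hxf r s hrv hsv, hxf q r hqv hrv,
        hxf p s hpv hsv]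
      exact hpl p (by simp [hp, hpv]) q (by simp [hq, hqv]) r (by simp [hr, hrv])
        s (by simp [hs, hsv]) hpq hqr hrs
    · rintro ⟨a, b⟩ he
      have hfr := hfree _ he
      simp only at hfr ⊢
      by_cases hav : a = v
      · subst hav
        rw [hfr.1 rfl, hxv]
        have : t ≠ u := by omega
        simp [g, this]
      by_cases hbv : b = v
      · subst hbv
        rw [hfr.2 rfl, hx, hxv]
        simp [g]
      · rw [hxf a b hav hbv]
        exact hfc (a, b) (by simp [he, hav, hbv])

/-! ### Cyclic order in `ZMod (n + 3)` -/

lemma zval_sub (n : ℕ) (a b : ZMod (n + 3)) :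
    (a - b).val = if b.val ≤ a.val then a.val - b.val else a.val + (n + 3) - b.val := by
  split_ifs with h
  · exact ZMod.val_sub h
  · have hlt := ZMod.val_lt b
    have hne : NeZero (b - a) := ⟨fun h0 => h (by rw [sub_eq_zero.1 h0])⟩
    rw [← neg_sub b a, ZMod.val_neg_of_ne_zero, ZMod.val_sub (by omega)]
    omega

/-- The formula for `(a - b).val` in terms of offsets from a base point `p`. -/
lemma zval_sub_base (n : ℕ) (p a b : ZMod (n + 3)) :
    (a - b).val = if (b - p).val ≤ (a - p).val then (a - p).val - (b - p).val
      else (a - p).val + (n + 3) - (b - p).val := by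
  rw [← zval_sub, sub_sub_sub_cancel_right]

lemma zval_one (n : ℕ) : (1 : ZMod (n + 3)).val = 1 := ZMod.val_one'' (by omega)

lemma zeq_add_one (n : ℕ) (a b : ZMod (n + 3)) : a = b + 1 ↔ (a - b).val = 1 := by
  rw [← zval_one n, (ZMod.val_injective _).eq_iff, sub_eq_iff_eq_add, add_comm b]

lemma isEdge_iff (n : ℕ) (i j : ZMod (n + 3)) :
    IsEdge n i j ↔ (i - j).val = 1 ∨ (j - i).val = 1 := by
  rw [IsEdge, zeq_add_one, zeq_add_one]

lemma mem_cycInt (n : ℕ) (k l v : ZMod (n + 3)) :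
    v ∈ cycInt n k l ↔ 1 ≤ (v - k).val ∧ (v - k).val ≤ (l - k).val := by
  simp [cycInt]

lemma cycInt_pred (n : ℕ) (k : ZMod (n + 3)) : cycInt n (k - 1) k = {k} := by
  ext v
  have h1 : (k - (k - 1)).val = 1 := by rw [sub_sub_cancel, zval_one]
  rw [mem_cycInt, h1, Finset.mem_singleton, ← le_antisymm_iff, eq_comm, ← zeq_add_one,
    sub_add_cancel]

lemma Clockwise.rotate {n : ℕ} {p q r s : ZMod (n + 3)} (h : Clockwise n p q r s) :
    Clockwise n q r s p := by
  unfold Clockwise at *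
  have e1 := zval_sub_base n p r q
  have e2 := zval_sub_base n p s q
  have e3 := zval_sub_base n p p q
  rw [sub_self, ZMod.val_zero] at e3
  rw [e1, e2, e3]
  have := ZMod.val_lt (s - p)
  split_ifs <;> omega

lemma Clockwise.isDiag {n : ℕ} {p q r s : ZMod (n + 3)} (h : Clockwise n p q r s) :
    IsDiag n p r := by
  unfold Clockwise at h
  have hlt := ZMod.val_lt (s - p)
  refine ⟨?_, ?_⟩
  · rintro rfl
    simp at h
  · rw [isEdge_iff]
    have e3 := zval_sub_base n p p r
    rw [sub_self, ZMod.val_zero] at e3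
    rw [e3]
    split_ifs <;> omega

lemma Clockwise.of_mem {n : ℕ} {p q r s a b c d : ZMod (n + 3)} (h : Clockwise n p q r s)
    (ha : a ∈ cycInt n p q) (hb : b ∈ cycInt n q r) (hc : c ∈ cycInt n r s)
    (hd : d ∈ cycInt n s p) : Clockwise n a b c d := by
  rw [mem_cycInt] at ha hb hc hd
  unfold Clockwise at *
  rw [zval_sub_base n p b q, zval_sub_base n p r q] at hb
  rw [zval_sub_base n p c r, zval_sub_base n p s r] at hc
  rw [zval_sub_base n p d s, zval_sub_base n p p s, sub_self, ZMod.val_zero] at hd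
  rw [zval_sub_base n p b a, zval_sub_base n p c a, zval_sub_base n p d a]
  have h1 := ZMod.val_lt (a - p)
  have h2 := ZMod.val_lt (b - p)
  have h3 := ZMod.val_lt (c - p)
  have h4 := ZMod.val_lt (d - p)
  have h5 := ZMod.val_lt (s - p)
  generalize (a - p).val = A at *
  generalize (b - p).val = B at *
  generalize (c - p).val = C at *
  generalize (d - p).val = D at *
  generalize (q - p).val = Q at *
  generalize (r - p).val = R at *
  generalize (s - p).val = S at *
  have hb' : Q < B ∧ B ≤ R := by split_ifs at hb <;> omega
  have hc' : R < C ∧ C ≤ S := by split_ifs at hc <;> omega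
  have hd' : D = 0 ∨ S < D := by split_ifs at hd <;> omega
  clear hb hc hd
  rw [if_pos (by omega), if_pos (by omega)]
  split_ifs <;> omega

lemma Clockwise.cycOrd {n : ℕ} {p q r s : ZMod (n + 3)} (h : Clockwise n p q r s) :
    CycOrd p.val q.val r.val s.val := by
  unfold Clockwise at h
  rw [zval_sub, zval_sub, zval_sub] at h
  have h2 := ZMod.val_lt p
  have h3 := ZMod.val_lt q
  have h4 := ZMod.val_lt r
  have h5 := ZMod.val_lt s
  unfold CycOrd
  split_ifs at h <;> omega

lemma clockwise_of_lt {n : ℕ} {p q r s : ZMod (n + 3)} (h1 : p.val < q.val) (h2 : q.val < r.val)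
    (h3 : r.val < s.val) : Clockwise n p q r s := by
  unfold Clockwise
  rw [zval_sub, zval_sub, zval_sub, if_pos (by omega), if_pos (by omega), if_pos (by omega)]
  omega

/-! ### Cut functions of balanced matrices -/

/-- For a function with total sum zero, the sum over a cyclic interval is a difference of two
partial sums, regardless of whether the interval wraps around. -/
lemma sum_cycInt (n : ℕ) (f : ZMod (n + 3) → ℝ) (hf : ∑ a, f a = 0) (k l : ZMod (n + 3)) :
    ∑ a ∈ cycInt n k l, f a =
      ∑ a with a.val ≤ l.val, f a - ∑ a with a.val ≤ k.val, f a := by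
  have hk := ZMod.val_lt k
  have hl := ZMod.val_lt l
  rcases le_or_gt k.val l.val with h | h
  · have hsub : (univ.filter fun a : ZMod (n + 3) => a.val ≤ k.val) ⊆
        univ.filter fun a => a.val ≤ l.val := by
      intro a
      simp only [Finset.mem_filter, Finset.mem_univ, true_and]
      omega
    rw [← Finset.sum_sdiff hsub, add_sub_cancel_right]
    congr 1
    ext a
    have ha := ZMod.val_lt a
    rw [mem_cycInt, zval_sub, zval_sub, if_pos h]
    simp only [Finset.mem_sdiff, Finset.mem_filter, Finset.mem_univ, true_and]
    split_ifs <;> omega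
  · have hsub : (univ.filter fun a : ZMod (n + 3) => a.val ≤ l.val) ⊆
        univ.filter fun a => a.val ≤ k.val := by
      intro a
      simp only [Finset.mem_filter, Finset.mem_univ, true_and]
      omega
    rw [← Finset.sum_sdiff hsub]
    rw [← Finset.sum_add_sum_compl (cycInt n k l)] at hf
    have : (cycInt n k l)ᶜ = (univ.filter fun a : ZMod (n + 3) => a.val ≤ k.val) \
        univ.filter fun a => a.val ≤ l.val := by
      ext a
      have ha := ZMod.val_lt a
      rw [Finset.mem_compl, mem_cycInt, zval_sub, zval_sub, if_neg (show ¬ k.val ≤ l.val by omega)]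
      simp only [Finset.mem_sdiff, Finset.mem_filter, Finset.mem_univ, true_and]
      split_ifs <;> omega
    rw [this] at hf
    linarith

/-- The total weight of the pairs with both entries in initial segments of the vertex list. -/
noncomputable def prefixSum (n : ℕ) (w : ZMod (n + 3) → ZMod (n + 3) → ℝ)
    (k l : ZMod (n + 3)) : ℝ :=
  ∑ a with a.val ≤ k.val, ∑ b with b.val ≤ l.val, w a b

section Balanced

variable {n : ℕ} {w : ZMod (n + 3) → ZMod (n + 3) → ℝ}

lemma prefixSum_symm (hs : ∀ i j, w i j = w j i) (k l : ZMod (n + 3)) :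
    prefixSum n w k l = prefixSum n w l k := by
  unfold prefixSum
  rw [Finset.sum_comm]
  simp only [hs]

lemma sum_cycInt_cycInt (hs : ∀ i j, w i j = w j i) (hb : ∀ p, ∑ j, w p j = 0)
    (k l k' l' : ZMod (n + 3)) :
    ∑ a ∈ cycInt n k l, ∑ b ∈ cycInt n k' l', w a b =
      prefixSum n w l l' - prefixSum n w l k' - prefixSum n w k l' + prefixSum n w k k' := by
  have hb' : ∀ b, ∑ a, w a b = 0 := fun b => by simp only [hs _ b, hb b]
  have h0 : ∑ a, (∑ b ∈ cycInt n k' l', w a b) = 0 := by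
    rw [Finset.sum_comm]
    exact Finset.sum_eq_zero fun b _ => hb' b
  rw [sum_cycInt n _ h0]
  simp only [sum_cycInt n _ (hb _), Finset.sum_sub_distrib, prefixSum]
  ring

lemma Icyc_eq_neg (hb : ∀ p, ∑ j, w p j = 0) (k l : ZMod (n + 3)) :
    Icyc n w k l = -∑ a ∈ cycInt n k l, ∑ b ∈ cycInt n k l, w a b := by
  rw [Icyc, ← Finset.sum_neg_distrib]
  refine Finset.sum_congr rfl fun a _ => ?_
  have := Finset.sum_add_sum_compl (cycInt n k l) (w a)
  rw [hb] at this
  linarith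

lemma Icyc_eq_prefixSum (hs : ∀ i j, w i j = w j i) (hb : ∀ p, ∑ j, w p j = 0)
    (k l : ZMod (n + 3)) :
    Icyc n w k l = 2 * prefixSum n w k l - prefixSum n w k k - prefixSum n w l l := by
  rw [Icyc_eq_neg hb, sum_cycInt_cycInt hs hb, prefixSum_symm hs l k]
  ring

lemma Icyc_symm (hs : ∀ i j, w i j = w j i) (hb : ∀ p, ∑ j, w p j = 0)
    (k l : ZMod (n + 3)) : Icyc n w k l = Icyc n w l k := by
  rw [Icyc_eq_prefixSum hs hb, Icyc_eq_prefixSum hs hb, prefixSum_symm hs l k]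
  ring

lemma Icyc_self (hs : ∀ i j, w i j = w j i) (hb : ∀ p, ∑ j, w p j = 0)
    (k : ZMod (n + 3)) : Icyc n w k k = 0 := by
  rw [Icyc_eq_prefixSum hs hb]
  ring

/-- The four-term identity: the two sides of a tropical Plücker relation differ by the total
weight joining two opposite arcs. -/
lemma Icyc_rect (hs : ∀ i j, w i j = w j i) (hb : ∀ p, ∑ j, w p j = 0)
    (p q r s : ZMod (n + 3)) :
    1 / 2 * Icyc n w p r + 1 / 2 * Icyc n w q s - 1 / 2 * Icyc n w q r - 1 / 2 * Icyc n w p s =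
      ∑ a ∈ cycInt n p q, ∑ b ∈ cycInt n r s, w a b := by
  rw [sum_cycInt_cycInt hs hb]
  simp only [Icyc_eq_prefixSum hs hb]
  ring

/-- A balanced matrix is the mixed second difference of half its cut function. -/
lemma weight_eq (hs : ∀ i j, w i j = w j i) (hb : ∀ p, ∑ j, w p j = 0) (k l : ZMod (n + 3)) :
    w k l = 1 / 2 * Icyc n w (k - 1) (l - 1) + 1 / 2 * Icyc n w k l -
      1 / 2 * Icyc n w k (l - 1) - 1 / 2 * Icyc n w (k - 1) l := by
  rw [Icyc_rect hs hb, cycInt_pred, cycInt_pred]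
  simp

lemma Icyc_edge (hs : ∀ i j, w i j = w j i) (hd : ∀ i, w i i = 0) (hb : ∀ p, ∑ j, w p j = 0)
    (k l : ZMod (n + 3)) (h : IsEdge n k l) : Icyc n w k l = 0 := by
  have key : ∀ k : ZMod (n + 3), Icyc n w (k - 1) k = 0 := by
    intro k
    rw [Icyc_eq_neg hb, cycInt_pred]
    simp [hd]
  rcases h with rfl | rfl
  · rw [Icyc_symm hs hb]
    simpa using key (l + 1)
  · simpa using key (k + 1)

/-- The mixed second difference of `X`; the inverse of taking half the cut function. -/
def secondDiff (n : ℕ) (X : ZMod (n + 3) → ZMod (n + 3) → ℝ) (k l : ZMod (n + 3)) : ℝ :=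
  X (k - 1) (l - 1) + X k l - X k (l - 1) - X (k - 1) l

variable {X : ZMod (n + 3) → ZMod (n + 3) → ℝ}

lemma secondDiff_symm (hs : ∀ i j, X i j = X j i) (k l : ZMod (n + 3)) :
    secondDiff n X k l = secondDiff n X l k := by
  unfold secondDiff
  rw [hs (k - 1) (l - 1), hs k l, hs k (l - 1), hs (k - 1) l]
  ring

lemma secondDiff_self (hd : ∀ i, X i i = 0) (he : ∀ i j, IsEdge n i j → X i j = 0)
    (k : ZMod (n + 3)) : secondDiff n X k k = 0 := by
  unfold secondDiff
  rw [hd, hd, he k (k - 1) (Or.inl (by ring)), he (k - 1) k (Or.inr (by ring))]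
  ring

lemma secondDiff_balanced (k : ZMod (n + 3)) : ∑ l, secondDiff n X k l = 0 := by
  unfold secondDiff
  have h : ∀ f : ZMod (n + 3) → ℝ, ∑ l, f (l - 1) = ∑ l, f l := fun f =>
    (Equiv.subRight (1 : ZMod (n + 3))).sum_comp f
  rw [Finset.sum_sub_distrib, Finset.sum_sub_distrib, Finset.sum_add_distrib, h (X (k - 1)),
    h (X k)]
  ring

/-- A function vanishing on the diagonal and on edges, with vanishing second difference, is
zero. -/
lemma eq_zero_of_secondDiff (hd : ∀ i, X i i = 0) (he : ∀ i j, IsEdge n i j → X i j = 0)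
    (h0 : ∀ k l, secondDiff n X k l = 0) (k l : ZMod (n + 3)) : X k l = 0 := by
  have step : ∀ f : ZMod (n + 3) → ℝ, (∀ l, f l = f (l - 1)) → ∀ a b, f a = f b := by
    intro f hf a b
    have h : ∀ m : ℕ, f (b + m) = f b := by
      intro m
      induction m with
      | zero => simp
      | succ m ih =>
        rw [hf, ← ih]
        congr 1
        push_cast
        ring
    have := h (a - b).val
    rwa [ZMod.natCast_zmod_val, add_sub_cancel] at this
  have h1 : ∀ k l, X k l - X k (l - 1) = 0 := by
    intro k l
    rw [step (fun k => X k l - X k (l - 1)) (fun k => by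
      have := h0 k l
      unfold secondDiff at this
      linarith) k l, hd, he l (l - 1) (Or.inl (by ring)), sub_zero]
  rw [step (X k) (fun l => by linarith [h1 k l]) l k, hd]

lemma half_Icyc_secondDiff (hs : ∀ i j, X i j = X j i) (hd : ∀ i, X i i = 0)
    (he : ∀ i j, IsEdge n i j → X i j = 0) (k l : ZMod (n + 3)) :
    1 / 2 * Icyc n (secondDiff n X) k l = X k l := by
  have ws := secondDiff_symm hs
  have wb := secondDiff_balanced (X := X)
  have := eq_zero_of_secondDiff
    (X := fun k l => 1 / 2 * Icyc n (secondDiff n X) k l - X k l)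
    (fun i => by rw [Icyc_self ws wb, hd]; ring)
    (fun i j h => by rw [Icyc_edge ws (secondDiff_self hd he) wb i j h, he i j h]; ring)
    (fun k l => by
      have h1 := weight_eq ws wb k l
      have h2 : secondDiff n X k l = X (k - 1) (l - 1) + X k l - X k (l - 1) - X (k - 1) l := rfl
      unfold secondDiff at h1 ⊢
      linarith) k l
  linarith

end Balanced

/-! ### Laminations and tropical points -/

lemma secondDiff_nonneg {n : ℕ} {X : ZMod (n + 3) → ZMod (n + 3) → ℝ}
    (he : ∀ i j, IsEdge n i j → X i j = 0)
    (hpl : ∀ p q r s, Clockwise n p q r s → X p r + X q s = max (X p q + X r s) (X q r + X p s))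
    (k l : ZMod (n + 3)) (h : IsDiag n k l) : 0 ≤ secondDiff n X k l := by
  obtain ⟨hne, hE⟩ := h
  rw [isEdge_iff] at hE
  have hc : Clockwise n (k - 1) k (l - 1) l := by
    unfold Clockwise
    have e1 : (k - (k - 1)).val = 1 := by rw [sub_sub_cancel, zval_one]
    have e2 : (l - 1 - (k - 1)).val = (l - k).val := by rw [sub_sub_sub_cancel_right]
    have e3 := zval_sub_base n k l (k - 1)
    have e4 : (k - 1 - k).val = n + 2 := by
      rw [← sub_sub_sub_cancel_right (k - 1) k (k - 1), zval_sub, sub_self, e1, ZMod.val_zero]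
      simp
    have e5 := zval_sub n l k
    have e6 := zval_sub n k l
    have h1 := ZMod.val_lt l
    have h2 := ZMod.val_lt k
    have h3 : k.val ≠ l.val := fun h => hne (ZMod.val_injective _ h)
    rw [e4] at e3
    have h4 := ZMod.val_lt (l - k)
    rw [e1, e2, e3]
    split_ifs at * <;> omega
  have := hpl _ _ _ _ hc
  rw [he (k - 1) k (Or.inr (by ring)), he (l - 1) l (Or.inr (by ring))] at this
  have h2 := le_max_right (0 + 0) (X k (l - 1) + X (k - 1) l)
  unfold secondDiff
  linarith

/-- Of the two weights joining opposite arcs cut out by `i - 1, k - 1, j - 1, l - 1`, one vanishes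
by the Plücker relation; it is a sum of nonnegative terms, among them the entry at `(i, j)` or the
one at `(k, l)`. -/
lemma secondDiff_noncross {n : ℕ} {X : ZMod (n + 3) → ZMod (n + 3) → ℝ}
    (hs : ∀ i j, X i j = X j i) (hd : ∀ i, X i i = 0) (he : ∀ i j, IsEdge n i j → X i j = 0)
    (hpl : ∀ p q r s, Clockwise n p q r s → X p r + X q s = max (X p q + X r s) (X q r + X p s))
    {i k j l : ZMod (n + 3)} (h : Clockwise n i k j l) :
    secondDiff n X i j = 0 ∨ secondDiff n X k l = 0 := by
  have ws := secondDiff_symm hs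
  have wb := secondDiff_balanced (X := X)
  have hI := half_Icyc_secondDiff hs hd he
  have key : ∀ {i k j l : ZMod (n + 3)}, Clockwise n i k j l →
      X (i - 1) (j - 1) + X (k - 1) (l - 1) - X (k - 1) (j - 1) - X (i - 1) (l - 1) = 0 →
      secondDiff n X i j = 0 := by
    intro i k j l h h0
    have h' : Clockwise n (i - 1) (k - 1) (j - 1) (l - 1) := by
      unfold Clockwise at *
      simpa only [sub_sub_sub_cancel_right] using h
    have hmem : ∀ {i k : ZMod (n + 3)}, 0 < (k - i).val → i ∈ cycInt n (i - 1) (k - 1) := by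
      intro i k hik
      rw [mem_cycInt, sub_sub_cancel, sub_sub_sub_cancel_right, zval_one]
      omega
    have hi := hmem h.1
    have hk := hmem h.rotate.1
    have hj := hmem h.rotate.rotate.1
    have hl := hmem h.rotate.rotate.rotate.1
    have hnn : ∀ a ∈ cycInt n (i - 1) (k - 1), ∀ b ∈ cycInt n (j - 1) (l - 1),
        0 ≤ secondDiff n X a b := fun a ha b hb =>
      secondDiff_nonneg he hpl a b (h'.of_mem ha hk hb hl).isDiag
    have hsum := Icyc_rect ws wb (i - 1) (k - 1) (j - 1) (l - 1)
    simp only [hI] at hsum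
    rw [h0] at hsum
    have h1 := (Finset.sum_eq_zero_iff_of_nonneg
      (fun a ha => Finset.sum_nonneg (hnn a ha))).1 hsum.symm i hi
    exact (Finset.sum_eq_zero_iff_of_nonneg (hnn i hi)).1 h1 j hj
  have h' : Clockwise n (i - 1) (k - 1) (j - 1) (l - 1) := by
    unfold Clockwise at *
    simpa only [sub_sub_sub_cancel_right] using h
  have hp := hpl _ _ _ _ h'
  rcases max_choice (X (i - 1) (k - 1) + X (j - 1) (l - 1))
    (X (k - 1) (j - 1) + X (i - 1) (l - 1)) with hm | hm
  · right
    refine key h.rotate ?_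
    rw [hs (j - 1) (i - 1), hs (k - 1) (i - 1)]
    linarith
  · left
    refine key h ?_
    linarith

/-- Half the cut function of a lamination satisfies the tropical Plücker relations: weights
joining `(p, q]` to `(r, s]` cross weights joining `(q, r]` to `(s, p]`. -/
lemma Lam.pluecker {n : ℕ} (G : Lam n) {p q r s : ZMod (n + 3)} (h : Clockwise n p q r s) :
    1 / 2 * Icyc n G.w p r + 1 / 2 * Icyc n G.w q s =
      max (1 / 2 * Icyc n G.w p q + 1 / 2 * Icyc n G.w r s)
        (1 / 2 * Icyc n G.w q r + 1 / 2 * Icyc n G.w p s) := by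
  have h1 := Icyc_rect G.symm G.balanced p q r s
  have h2 := Icyc_rect G.symm G.balanced q r s p
  rw [Icyc_symm G.symm G.balanced r p, Icyc_symm G.symm G.balanced q p] at h2
  have hself : ∀ {p q : ZMod (n + 3)}, 0 < (q - p).val → q ∈ cycInt n p q := by
    intro p q hpq
    rw [mem_cycInt]
    omega
  have hp := hself h.rotate.rotate.rotate.1
  have hq := hself h.1
  have hr := hself h.rotate.1
  have hs := hself h.rotate.rotate.1
  have n1 : 0 ≤ ∑ a ∈ cycInt n p q, ∑ b ∈ cycInt n r s, G.w a b :=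
    Finset.sum_nonneg fun a ha => Finset.sum_nonneg fun b hb =>
      G.nonneg a b (h.of_mem ha hr hb hp).isDiag
  have n2 : 0 ≤ ∑ a ∈ cycInt n q r, ∑ b ∈ cycInt n s p, G.w a b :=
    Finset.sum_nonneg fun a ha => Finset.sum_nonneg fun b hb =>
      G.nonneg a b (h.of_mem hq ha hs hb).rotate.isDiag
  rw [eq_max_iff_le]
  refine ⟨by linarith, by linarith, ?_⟩
  by_cases hz : ∑ a ∈ cycInt n p q, ∑ b ∈ cycInt n r s, G.w a b = 0
  · right
    linarith
  · left
    obtain ⟨a, ha, hz⟩ := Finset.exists_ne_zero_of_sum_ne_zero hz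
    obtain ⟨c, hc, hz⟩ := Finset.exists_ne_zero_of_sum_ne_zero hz
    have : ∑ b ∈ cycInt n q r, ∑ d ∈ cycInt n s p, G.w b d = 0 := by
      refine Finset.sum_eq_zero fun b hb => Finset.sum_eq_zero fun d hd => ?_
      have hcw := h.of_mem ha hb hc hd
      exact (G.noncross a c b d hcw.isDiag hcw.rotate.isDiag (Or.inl hcw)).resolve_left hz
    linarith

lemma Lam.ext_w {n : ℕ} {G H : Lam n} (h : G.w = H.w) : G = H := by
  cases G
  cases H
  congr

/-! ### Triangulations as noncrossing pairs of integers -/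

open Classical in
/-- The edges of the polygon and the diagonals of `T`, as pairs `i < j` of natural numbers. -/
noncomputable def segs (n : ℕ) (T : PartialTri n) : Finset (ℕ × ℕ) :=
  (range (n + 3) ×ˢ range (n + 3)).filter fun e => e.1 < e.2 ∧
    (IsEdge n e.1 e.2 ∨ s((e.1 : ZMod (n + 3)), (e.2 : ZMod (n + 3))) ∈ T.diags)

lemma isEdge_natCast {n i j : ℕ} (hij : i < j) (hj : j < n + 3) :
    IsEdge n i j ↔ j = i + 1 ∨ (i = 0 ∧ j = n + 2) := by
  rw [isEdge_iff, zval_sub, zval_sub, ZMod.val_natCast_of_lt hj,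
    ZMod.val_natCast_of_lt (hij.trans hj), if_neg (by omega), if_pos hij.le]
  omega

lemma segs_nonCrossing (n : ℕ) (T : PartialTri n) : NonCrossing (range (n + 3)) (segs n T) := by
  constructor
  · intro e he
    simp only [segs, Finset.mem_filter, Finset.mem_product] at he
    exact ⟨he.1.1, he.1.2, he.2.1⟩
  · rintro ⟨i, j⟩ he ⟨k, l⟩ hf ⟨h1, h2, h3⟩
    simp only [segs, Finset.mem_filter, Finset.mem_product, Finset.mem_range] at he hf h1 h2 h3
    obtain ⟨⟨hi, hj⟩, hij, he⟩ := he
    obtain ⟨⟨hk, hl⟩, hkl, hf⟩ := hf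
    rw [isEdge_natCast hij hj] at he
    rw [isEdge_natCast hkl hl] at hf
    have he' := he.resolve_left (by omega)
    have hf' := hf.resolve_left (by omega)
    refine T.noncross _ _ _ _ he' hf' (Or.inl (clockwise_of_lt ?_ ?_ ?_)) <;>
      rwa [ZMod.val_natCast_of_lt (by omega), ZMod.val_natCast_of_lt (by omega)]

lemma segs_card (n : ℕ) (T : PartialTri n) (hT : T.diags.card = n) :
    (segs n T).card + 3 = 2 * (range (n + 3)).card := by
  classical
  have hle := NonCrossing.card_le (n + 1) (segs_nonCrossing n T) (by simp)
  let A : Finset (ℕ × ℕ) := (range (n + 2)).image fun i => (i, i + 1)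
  let D : Finset (ℕ × ℕ) := (segs n T).filter fun e => ¬ IsEdge n e.1 e.2
  have hA : A.card = n + 2 := by
    rw [Finset.card_image_of_injective _ (fun a b h => (Prod.ext_iff.1 h).1), Finset.card_range]
  have hD : n ≤ D.card := by
    have hsub : T.diags ⊆ D.image fun e => s((e.1 : ZMod (n + 3)), (e.2 : ZMod (n + 3))) := by
      intro d
      induction d using Sym2.ind with
      | _ i j =>
        intro hd
        have key : ∀ i j : ZMod (n + 3), s(i, j) ∈ T.diags → i.val < j.val →
            (i.val, j.val) ∈ D := by
          intro i j hd hlt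
          have := (T.mem_isDiag i j hd).2
          simp [D, segs, hlt, hd, this, ZMod.val_lt]
        rw [Finset.mem_image]
        rcases lt_trichotomy i.val j.val with h | h | h
        · exact ⟨_, key i j hd h, by simp⟩
        · exact absurd (ZMod.val_injective _ h) (T.mem_isDiag i j hd).1
        · exact ⟨_, key j i (by rwa [Sym2.eq_swap]) h, by simp [Sym2.eq_swap]⟩
    have h1 := Finset.card_le_card hsub
    have h2 := Finset.card_image_le (s := D)
      (f := fun e => s((e.1 : ZMod (n + 3)), (e.2 : ZMod (n + 3))))
    omega
  have hAD : Disjoint (insert (0, n + 2) A) D := by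
    rw [Finset.disjoint_left]
    rintro ⟨i, j⟩ he hf
    simp only [D, segs, Finset.mem_filter, Finset.mem_product, Finset.mem_range] at hf
    rw [isEdge_natCast hf.1.2.1 hf.1.1.2] at hf
    simp only [A, Finset.mem_insert, Finset.mem_image, Finset.mem_range, Prod.mk.injEq] at he
    rcases he with he | ⟨a, ha, he⟩ <;> omega
  have hsub : insert (0, n + 2) A ∪ D ⊆ segs n T := by
    refine Finset.union_subset ?_ (Finset.filter_subset _ _)
    rintro ⟨i, j⟩ he
    simp only [A, Finset.mem_insert, Finset.mem_image, Finset.mem_range, Prod.mk.injEq] at he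
    have hij : i < j ∧ j < n + 3 ∧ (j = i + 1 ∨ (i = 0 ∧ j = n + 2)) := by
      rcases he with he | ⟨a, ha, he⟩ <;> omega
    simp only [segs, Finset.mem_filter, Finset.mem_product, Finset.mem_range]
    exact ⟨⟨by omega, hij.2.1⟩, hij.1, Or.inl ((isEdge_natCast hij.1 hij.2.1).2 hij.2.2)⟩
  have hnot : ((0, n + 2) : ℕ × ℕ) ∉ A := by
    simp only [A, Finset.mem_image, Finset.mem_range, Prod.mk.injEq, not_exists]
    omega
  have hfin := Finset.card_le_card hsub
  rw [Finset.card_union_of_disjoint hAD, Finset.card_insert_of_notMem hnot] at hfin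
  rw [Finset.card_range] at *
  omega

/-- Symmetric functions on pairs of vertices that vanish on edges and satisfy the tropical
Plücker relations agree off the diagonal as soon as they agree on a triangulation. -/
lemma eq_of_agree {n : ℕ} (T : PartialTri n) (hT : T.diags.card = n)
    {x y : ZMod (n + 3) → ZMod (n + 3) → ℝ} (hx : ∀ i j, x i j = x j i)
    (hy : ∀ i j, y i j = y j i) (hex : ∀ i j, IsEdge n i j → x i j = 0)
    (hey : ∀ i j, IsEdge n i j → y i j = 0)
    (hpx : ∀ p q r s, Clockwise n p q r s → x p r + x q s = max (x p q + x r s) (x q r + x p s))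
    (hpy : ∀ p q r s, Clockwise n p q r s → y p r + y q s = max (y p q + y r s) (y q r + y p s))
    (h : ∀ i j, s(i, j) ∈ T.diags → x i j = y i j) (i j : ZMod (n + 3)) (hij : i ≠ j) :
    x i j = y i j := by
  have hcw : ∀ p ∈ range (n + 3), ∀ q ∈ range (n + 3), ∀ r ∈ range (n + 3),
      ∀ s ∈ range (n + 3), p < q → q < r → r < s → Clockwise n p q r s := by
    intro p hp q hq r hr s hs h1 h2 h3
    rw [Finset.mem_range] at *
    apply clockwise_of_lt <;>
      rwa [ZMod.val_natCast_of_lt (by omega), ZMod.val_natCast_of_lt (by omega)]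
  have := Pluecker.unique (n + 1) (segs_nonCrossing n T) (by simp) (segs_card n T hT)
    (x := fun a b => x a b) (y := fun a b => y a b) (fun _ _ => hx _ _) (fun _ _ => hy _ _)
    (fun p hp q hq r hr s hs h1 h2 h3 => hpx _ _ _ _ (hcw p hp q hq r hr s hs h1 h2 h3))
    (fun p hp q hq r hr s hs h1 h2 h3 => hpy _ _ _ _ (hcw p hp q hq r hr s hs h1 h2 h3))
    (by
      intro e he
      simp only [segs, Finset.mem_filter] at he
      rcases he.2.2 with h1 | h1
      · rw [hex _ _ h1, hey _ _ h1]
      · exact h _ _ h1)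
    i.val (by simp [ZMod.val_lt]) j.val (by simp [ZMod.val_lt])
    (fun h => hij (ZMod.val_injective _ h))
  simpa using this

/-- Any values on a triangulation extend to a tropical point. -/
lemma exists_tropPt {n : ℕ} (T : PartialTri n) (hT : T.diags.card = n)
    (c : ZMod (n + 3) → ZMod (n + 3) → ℝ) (hc : ∀ i j, c i j = c j i) :
    ∃ X : TropPt n, ∀ i j, s(i, j) ∈ T.diags → X.x i j = c i j := by
  classical
  obtain ⟨x, hx, hpl, hxc⟩ := Pluecker.exists_extension (n + 1) (segs_nonCrossing n T) (by simp)
    (segs_card n T hT)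
    (fun i j => if IsEdge n i j then 0 else c i j)
  have hval : ∀ i j : ZMod (n + 3), i.val < j.val → (IsEdge n i j ∨ s(i, j) ∈ T.diags) →
      x i.val j.val = if IsEdge n i j then 0 else c i j := by
    intro i j hlt h
    have := hxc (i.val, j.val) (by simp [segs, hlt, h, ZMod.val_lt])
    simpa using this
  have hsymE : ∀ i j, IsEdge n i j ↔ IsEdge n j i := fun i j => by
    unfold IsEdge; exact or_comm
  have hval' : ∀ i j : ZMod (n + 3), i ≠ j → (IsEdge n i j ∨ s(i, j) ∈ T.diags) →
      x i.val j.val = if IsEdge n i j then 0 else c i j := by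
    intro i j hne h
    rcases lt_trichotomy i.val j.val with h1 | h1 | h1
    · exact hval i j h1 h
    · exact absurd (ZMod.val_injective _ h1) hne
    · rw [hx, hc i j]
      simp only [hsymE i j] at h ⊢
      exact hval j i h1 (by rwa [Sym2.eq_swap (a := j)])
  let X : ZMod (n + 3) → ZMod (n + 3) → ℝ := fun i j => if i = j then 0 else x i.val j.val
  have hXne : ∀ i j, i ≠ j → X i j = x i.val j.val := fun i j h => if_neg h
  refine ⟨⟨X, ?_, ?_, ?_, ?_⟩, ?_⟩
  · intro i j
    simp only [X, eq_comm (a := j), hx j.val]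
  · simp [X]
  · intro i j h
    by_cases hij : i = j
    · simp [X, hij]
    · rw [hXne i j hij, hval' i j hij (Or.inl h), if_pos h]
  · intro p q r s h
    have hcyc := h.cycOrd
    have hne : ∀ {a b : ZMod (n + 3)}, a.val ≠ b.val → a ≠ b := fun h h' => h (by rw [h'])
    have hrel := hpl.cyc hx (p := p.val) (q := q.val) (r := r.val) (s := s.val)
      (by simp [ZMod.val_lt]) (by simp [ZMod.val_lt]) (by simp [ZMod.val_lt])
      (by simp [ZMod.val_lt]) hcyc
    unfold CycOrd at hcyc
    rwa [hXne p r (hne (by omega)), hXne q s (hne (by omega)), hXne p q (hne (by omega)),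
      hXne r s (hne (by omega)), hXne q r (hne (by omega)), hXne p s (hne (by omega))]
  · intro i j h
    obtain ⟨hne, hE⟩ := T.mem_isDiag i j h
    show X i j = c i j
    rw [hXne i j hne, hval' i j hne (Or.inr h), if_neg hE]

/-- For every complete triangulation `T`, the map `φ_T` sending an `A`-lamination `G`
to `((1/2)·I_{ij}(G))_{{ij}∈T}` is a bijection onto `ℝ^T`: every (symmetric) family of
reals indexed by the diagonals of `T` has a unique preimage. -/
theorem lamination_coords_bijective
    (n : ℕ) (hn : 1 ≤ n) (T : PartialTri n) (hT : T.diags.card = n)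
    (c : ZMod (n + 3) → ZMod (n + 3) → ℝ) (hc : ∀ i j, c i j = c j i) :
    ∃! G : Lam n, ∀ i j, s(i, j) ∈ T.diags → (1 / 2) * Icyc n G.w i j = c i j := by
  obtain ⟨X, hX⟩ := exists_tropPt T hT c hc
  have hcross : ∀ i j k l, Cross n i j k l →
      secondDiff n X.x i j = 0 ∨ secondDiff n X.x k l = 0 := by
    rintro i j k l (h | h)
    · exact secondDiff_noncross X.symm X.diag_zero X.edge_zero X.pluecker h
    · rw [secondDiff_symm X.symm k l]
      exact secondDiff_noncross X.symm X.diag_zero X.edge_zero X.pluecker h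
  have hI := half_Icyc_secondDiff X.symm X.diag_zero X.edge_zero
  let G : Lam n :=
    { w := secondDiff n X.x
      symm := secondDiff_symm X.symm
      diag_zero := secondDiff_self X.diag_zero X.edge_zero
      nonneg := secondDiff_nonneg X.edge_zero X.pluecker
      noncross := fun i j k l _ _ h => hcross i j k l h
      balanced := secondDiff_balanced }
  refine ⟨G, fun i j h => by rw [← hX i j h]; exact hI i j, fun H hH => Lam.ext_w ?_⟩
  have hHX : ∀ i j, 1 / 2 * Icyc n H.w i j = X.x i j := by
    intro i j
    by_cases hij : i = j
    · rw [hij, Icyc_self H.symm H.balanced, X.diag_zero, mul_zero]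
    · exact eq_of_agree T hT (x := fun i j => 1 / 2 * Icyc n H.w i j)
        (fun i j => by rw [Icyc_symm H.symm H.balanced]) X.symm
        (fun i j h => by rw [Icyc_edge H.symm H.diag_zero H.balanced i j h, mul_zero])
        X.edge_zero (fun p q r s h => H.pluecker h) X.pluecker
        (fun i j h => by rw [hH i j h, hX i j h]) i j hij
  funext k l
  rw [weight_eq H.symm H.balanced k l, hHX, hHX, hHX, hHX]
  rfl
end

section
/- For every complete triangulation T of the N-gon and every family of real numbers (c_{ij})_{{ij}∈T}, there exists a unique x ∈ L(ℝ) with x_{ij} = c_{ij} for all {ij} ∈ T. In particular, for any real numbers c indexed by diagonals, the face F_c^T of a complete triangulation T consists of exactly one point. -/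
/-!
A triangulation of a polygon with at least four vertices has an ear: a vertex `v` on no diagonal,
whose two neighbours `u`, `w` are joined by a diagonal of the triangulation. Cutting `v` off leaves
a triangulated polygon with one vertex less, in which `{u w}` is now an edge. A tropical point on
the smaller polygon extends to `v` in exactly one way, because the relation for `u, v, w, z` reads
`x_{vz} = max (x_{uv} + x_{wz}) (x_{vw} + x_{uz}) - x_{uw}`, and the values so defined satisfy every
tropical Plücker relation through `v`. Induction on the number of vertices then gives existence and
uniqueness, provided the values on the edges are allowed to be arbitrary, since cutting off an ear
turns a diagonal into an edge.

The polygon is encoded as a finite set `S` of natural numbers in increasing order, and only the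
pairs `i < j` of `S` are used. The free vertex is found strictly inside a shortest diagonal
(`NC.exists_free`), so it is neither the minimum nor the maximum of `S`, and its neighbours are its
predecessor and successor in `S`: no wrap-around occurs. Removing it proves at the same time that
a noncrossing family has at most `|S| - 3` elements (`NC.card_le`) and that, in the case of
equality, the free vertex is an ear (`NC.exists_ear`). The extension step is `TropOn.extend`, and
`clockwise_iff` transfers the cyclic statement to the linear one.
-/

open Finset

namespace EarCut

/-! ### Noncrossing families on a linearly ordered polygon -/

/-- `i < j` are joined by a diagonal of the convex polygon whose vertices, in clockwise order, are
the elements of `S` in increasing order: some vertex lies on each side of the segment. -/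
def Chord (S : Finset ℕ) (i j : ℕ) : Prop :=
  i ∈ S ∧ j ∈ S ∧ i < j ∧ (∃ k ∈ S, i < k ∧ k < j) ∧ ∃ k ∈ S, k < i ∨ j < k

/-- `T` is a set of pairwise noncrossing diagonals of the polygon `S`, each diagonal being stored as
the pair of its endpoints in increasing order. -/
structure NC (S : Finset ℕ) (T : Finset (ℕ × ℕ)) : Prop where
  chord : ∀ i j, (i, j) ∈ T → Chord S i j
  nc : ∀ i j k l, (i, j) ∈ T → (k, l) ∈ T → i < k → k < j → j < l → False

/-- `v` is a vertex of `S` with predecessor `u` and successor `w`. -/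
structure Consec (S : Finset ℕ) (u v w : ℕ) : Prop where
  hu : u ∈ S
  hv : v ∈ S
  hw : w ∈ S
  uv : u < v
  vw : v < w
  left : ∀ k ∈ S, k < v → k ≤ u
  right : ∀ k ∈ S, v < k → w ≤ k

lemma exists_consec {S : Finset ℕ} {a v b : ℕ} (ha : a ∈ S) (hv : v ∈ S) (hb : b ∈ S)
    (hav : a < v) (hvb : v < b) : ∃ u w, Consec S u v w := by
  have hl : (S.filter (· < v)).Nonempty := ⟨a, by simp [ha, hav]⟩
  have hr : (S.filter (v < ·)).Nonempty := ⟨b, by simp [hb, hvb]⟩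
  have h1 := (S.filter (· < v)).max'_mem hl
  have h2 := (S.filter (v < ·)).min'_mem hr
  rw [mem_filter] at h1 h2
  refine ⟨_, _, h1.1, hv, h2.1, h1.2, h2.2, fun k hk hkv => ?_, fun k hk hkv => ?_⟩
  · exact le_max' _ _ (by simp [hk, hkv])
  · exact min'_le _ _ (by simp [hk, hkv])

/-- A noncrossing family leaves free some vertex other than the minimum and the maximum: any vertex
strictly inside a shortest diagonal. -/
lemma NC.exists_free {S : Finset ℕ} {T : Finset (ℕ × ℕ)} (h : NC S T) (hS : 3 ≤ S.card) :
    ∃ u v w, Consec S u v w ∧ ∀ i j, (i, j) ∈ T → i ≠ v ∧ j ≠ v := by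
  rcases T.eq_empty_or_nonempty with rfl | hT
  · have hne : S.Nonempty := card_pos.mp (by omega)
    have h1 : 0 < ((S.erase (S.min' hne)).erase (S.max' hne)).card := by
      have := pred_card_le_card_erase (s := S) (a := S.min' hne)
      have := pred_card_le_card_erase (s := S.erase (S.min' hne)) (a := S.max' hne)
      omega
    obtain ⟨v, hv⟩ := card_pos.mp h1
    simp only [mem_erase] at hv
    obtain ⟨u, w, huw⟩ := exists_consec (S.min'_mem hne) hv.2.2 (S.max'_mem hne)
      (lt_of_le_of_ne (min'_le _ _ hv.2.2) (Ne.symm hv.2.1))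
      (lt_of_le_of_ne (le_max' _ _ hv.2.2) hv.1)
    exact ⟨u, v, w, huw, by simp⟩
  · obtain ⟨⟨i, j⟩, hij, hmin⟩ := exists_min_image T (fun p => p.2 - p.1) hT
    obtain ⟨hi, hj, hlt, ⟨v, hv, hiv, hvj⟩, -⟩ := h.chord i j hij
    obtain ⟨u, w, huw⟩ := exists_consec hi hv hj hiv hvj
    refine ⟨u, v, w, huw, fun k l hkl => ?_⟩
    have h1 := hmin _ hkl
    have h2 := (h.chord k l hkl).2.2.1
    have h3 := h.nc i j k l hij hkl
    have h4 := h.nc k l i j hkl hij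
    simp only at h1
    constructor
    · rintro rfl
      by_cases hl : j < l
      · exact h3 hiv hvj hl
      · omega
    · rintro rfl
      by_cases hk : k < i
      · exact h4 hk hiv hvj
      · omega

lemma NC.erase {S : Finset ℕ} {T : Finset (ℕ × ℕ)} {u v w : ℕ} (h : NC S T)
    (hc : Consec S u v w) (hf : ∀ i j, (i, j) ∈ T → i ≠ v ∧ j ≠ v) :
    NC (S.erase v) (T.erase (u, w)) := by
  have huv := hc.uv
  have hvw := hc.vw
  have hu : u ∈ S.erase v := mem_erase.2 ⟨by omega, hc.hu⟩
  have hw : w ∈ S.erase v := mem_erase.2 ⟨by omega, hc.hw⟩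
  refine ⟨fun i j hij => ?_, fun i j k l hij hkl => ?_⟩
  · rw [mem_erase] at hij
    obtain ⟨hne, hij⟩ := hij
    obtain ⟨hi, hj, hlt, ⟨k, hk, hik, hkj⟩, ⟨l, hl, hl'⟩⟩ := h.chord i j hij
    obtain ⟨hiv, hjv⟩ := hf i j hij
    refine ⟨mem_erase.2 ⟨hiv, hi⟩, mem_erase.2 ⟨hjv, hj⟩, hlt, ?_, ?_⟩
    · by_cases hkv : k = v
      · subst hkv
        have h1 := hc.left i hi hik
        have h2 := hc.right j hj hkj
        by_cases hiu : i = u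
        · have : j ≠ w := by rintro rfl; exact hne (by rw [hiu])
          exact ⟨w, hw, by omega, by omega⟩
        · exact ⟨u, hu, by omega, by omega⟩
      · exact ⟨k, mem_erase.2 ⟨hkv, hk⟩, hik, hkj⟩
    · by_cases hlv : l = v
      · subst hlv
        rcases hl' with hl' | hl'
        · exact ⟨u, hu, by omega⟩
        · exact ⟨w, hw, by omega⟩
      · exact ⟨l, mem_erase.2 ⟨hlv, hl⟩, hl'⟩
  · exact h.nc i j k l (mem_of_mem_erase hij) (mem_of_mem_erase hkl)

lemma NC.card_le (m : ℕ) : ∀ {S : Finset ℕ} {T : Finset (ℕ × ℕ)}, NC S T → S.card = m + 3 →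
    T.card ≤ m := by
  induction m with
  | zero =>
    intro S T h hS
    rw [Nat.le_zero, card_eq_zero, eq_empty_iff_forall_notMem]
    rintro ⟨i, j⟩ hij
    -- A diagonal together with a vertex on each side gives four vertices.
    obtain ⟨hi, hj, hlt, ⟨k, hk, hik, hkj⟩, ⟨l, hl, hl'⟩⟩ := h.chord i j hij
    have hsub : ({i, j, k, l} : Finset ℕ) ⊆ S := by
      intro a ha
      simp only [mem_insert, mem_singleton] at ha
      rcases ha with rfl | rfl | rfl | rfl <;> assumption
    have h4 : ({i, j, k, l} : Finset ℕ).card = 4 := by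
      have hl1 : i ≠ l ∧ j ≠ l ∧ k ≠ l := by omega
      have hl2 : i ≠ j ∧ i ≠ k ∧ j ≠ k := by omega
      simp [hl1, hl2]
    have := card_le_card hsub
    omega
  | succ m ih =>
    intro S T h hS
    obtain ⟨u, v, w, hc, hf⟩ := h.exists_free (by omega)
    have h1 := ih (h.erase hc hf) (by rw [card_erase_of_mem hc.hv]; omega)
    have := pred_card_le_card_erase (s := T) (a := (u, w))
    omega

/-- A triangulation has an ear, and cutting it off leaves a triangulation. -/
lemma NC.exists_ear {m : ℕ} {S : Finset ℕ} {T : Finset (ℕ × ℕ)} (h : NC S T)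
    (hS : S.card = m + 4) (hT : T.card = m + 1) :
    ∃ u v w, Consec S u v w ∧ (u, w) ∈ T ∧ (∀ i j, (i, j) ∈ T → i ≠ v ∧ j ≠ v) ∧
      NC (S.erase v) (T.erase (u, w)) ∧ (S.erase v).card = m + 3 ∧
      (T.erase (u, w)).card = m := by
  obtain ⟨u, v, w, hc, hf⟩ := h.exists_free (by omega)
  have hS' : (S.erase v).card = m + 3 := by rw [card_erase_of_mem hc.hv]; omega
  have h1 := (h.erase hc hf).card_le m hS'
  have huw : (u, w) ∈ T := by
    by_contra hn
    rw [erase_eq_of_notMem hn] at h1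
    omega
  exact ⟨u, v, w, hc, huw, hf, h.erase hc hf, hS', by rw [card_erase_of_mem huw]; omega⟩

/-! ### Tropical points on a linearly ordered polygon -/

/-- `X` satisfies the tropical Plücker relations on the polygon `S`. No condition is put on the
edges, and only the values `X i j` with `i < j` in `S` matter. -/
def TropOn (S : Finset ℕ) (X : ℕ → ℕ → ℝ) : Prop :=
  ∀ p ∈ S, ∀ q ∈ S, ∀ r ∈ S, ∀ s ∈ S, p < q → q < r → r < s →
    X p r + X q s = max (X p q + X r s) (X q r + X p s)

/-- The extension to the ear `v`, with neighbours `u` and `w`, of a function `X` on the polygon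
without `v`. The edges `{u v}` and `{v w}` get the values `a` and `b`; the other values are forced by
the tropical Plücker relation of `v`, its neighbours and a fourth vertex. -/
noncomputable def ext (u v w : ℕ) (a b : ℝ) (X : ℕ → ℕ → ℝ) (i j : ℕ) : ℝ :=
  if i = v then
    if j = w then b else max (a + X w j) (b + X u j) - X u w
  else if j = v then
    if i = u then a else max (a + X i w) (b + X i u) - X u w
  else X i j

/-- A relation for `v` and three vertices away from `u` and `w` is the tropical combination of
those in which
`w`, respectively `u`, replaces `v`. When a neighbour of `v` is among the three vertices, one of
these degenerates and the other suffices; when both are, the relation is the definition of `ext`. -/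
lemma TropOn.extend {S : Finset ℕ} {u v w : ℕ} {X : ℕ → ℕ → ℝ} (hc : Consec S u v w)
    (hX : TropOn (S.erase v) X) (a b : ℝ) : TropOn S (ext u v w a b X) := by
  have huv := hc.uv
  have hvw := hc.vw
  have hu : u ∈ S.erase v := mem_erase.2 ⟨by omega, hc.hu⟩
  have hw : w ∈ S.erase v := mem_erase.2 ⟨by omega, hc.hw⟩
  have key : ∀ z, z ∈ S → z ≠ v → z ∈ S.erase v := fun z h1 h2 => mem_erase.2 ⟨h2, h1⟩
  intro p hp q hq r hr s hs hpq hqr hrs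
  have hl : ∀ z ∈ S, z < v → z = u ∨ z < u := fun z h1 h2 => (hc.left z h1 h2).eq_or_lt
  have hr0 : ∀ z ∈ S, v < z → w = z ∨ w < z := fun z h1 h2 => (hc.right z h1 h2).eq_or_lt
  unfold ext
  by_cases h1 : p = v
  · subst h1
    have hq' := key q hq (by omega)
    have hr' := key r hr (by omega)
    have hs' := key s hs (by omega)
    have P1 := hX u hu q hq' r hr' s hs' (by omega) hqr hrs
    rcases hr0 q hq hpq with rfl | hwq
    · grind
    · have P2 := hX w hw q hq' r hr' s hs' (by omega) hqr hrs
      grind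
  by_cases h2 : q = v
  · subst h2
    have hp' := key p hp (by omega)
    have hr' := key r hr (by omega)
    have hs' := key s hs (by omega)
    rcases hl p hp hpq with rfl | hpu <;> rcases hr0 r hr hqr with rfl | hwr
    · grind
    · have P1 := hX p hp' w hw r hr' s hs' (by omega) hwr hrs
      grind
    · have P1 := hX p hp' u hu w hw s hs' (by omega) (by omega) hrs
      grind
    · have P1 := hX p hp' w hw r hr' s hs' (by omega) hwr hrs
      have P2 := hX p hp' u hu r hr' s hs' hpu (by omega) hrs
      grind
  by_cases h3 : r = v
  · subst h3
    have hp' := key p hp (by omega)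
    have hq' := key q hq (by omega)
    have hs' := key s hs (by omega)
    rcases hl q hq hqr with rfl | hqu <;> rcases hr0 s hs hrs with rfl | hws
    · grind
    · have P1 := hX p hp' q hq' w hw s hs' hpq (by omega) hws
      grind
    · have P1 := hX p hp' q hq' u hu w hw hpq hqu (by omega)
      grind
    · have P1 := hX p hp' q hq' w hw s hs' hpq (by omega) hws
      have P2 := hX p hp' q hq' u hu s hs' hpq hqu (by omega)
      grind
  by_cases h4 : s = v
  · subst h4
    have hp' := key p hp (by omega)
    have hq' := key q hq (by omega)
    have hr' := key r hr (by omega)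
    have P1 := hX p hp' q hq' r hr' w hw hpq hqr (by omega)
    rcases hl r hr hrs with rfl | hru
    · grind
    · have P2 := hX p hp' q hq' r hr' u hu hpq hqr hru
      grind
  simp only [h1, h2, h3, h4, if_false]
  exact hX p (key p hp h1) q (key q hq h2) r (key r hr h3) s (key s hs h4) hpq hqr hrs

/-- Existence of a tropical point with prescribed values on a triangulation and on the edges. -/
lemma exists_trop (f : ℕ → ℕ → ℝ) (m : ℕ) : ∀ {S : Finset ℕ} {T : Finset (ℕ × ℕ)}, NC S T →
    S.card = m + 3 → T.card = m → ∃ X, TropOn S X ∧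
      ∀ i ∈ S, ∀ j ∈ S, i < j → ((i, j) ∈ T ∨ ¬ Chord S i j) → X i j = f i j := by
  induction m with
  | zero =>
    intro S T h hS hT
    refine ⟨f, fun p hp q hq r hr s hs hpq hqr hrs => ?_, fun _ _ _ _ _ _ => rfl⟩
    -- There are no four vertices: otherwise `{p r}` alone would exceed the bound on diagonals.
    have h1 : NC S {(p, r)} := by
      refine ⟨fun i j hij => ?_, fun i j k l hij hkl => ?_⟩
      · simp only [mem_singleton, Prod.mk.injEq] at hij
        obtain ⟨rfl, rfl⟩ := hij
        exact ⟨hp, hr, by omega, ⟨q, hq, hpq, hqr⟩, ⟨s, hs, Or.inr hrs⟩⟩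
      · simp only [mem_singleton, Prod.mk.injEq] at hij hkl
        omega
    have := h1.card_le 0 hS
    simp at this
  | succ m ih =>
    intro S T h hS hT
    obtain ⟨u, v, w, hc, huw, hf, hN, hS', hT'⟩ := h.exists_ear hS hT
    obtain ⟨X, hX, hXf⟩ := ih hN hS' hT'
    have huv := hc.uv
    have hvw := hc.vw
    have hu : u ∈ S.erase v := mem_erase.2 ⟨by omega, hc.hu⟩
    have hw : w ∈ S.erase v := mem_erase.2 ⟨by omega, hc.hw⟩
    refine ⟨ext u v w (f u v) (f v w) X, hX.extend hc _ _, fun i hi j hj hij h' => ?_⟩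
    unfold ext
    by_cases hiv : i = v
    · subst hiv
      have h1 : ¬ Chord S i j := h'.resolve_left fun h2 => (hf _ _ h2).1 rfl
      have h2 := hc.right j hj hij
      by_cases hjw : j = w
      · simp [hjw]
      · exact absurd ⟨hi, hj, hij, ⟨w, hc.hw, hvw, by omega⟩, ⟨u, hc.hu, Or.inl huv⟩⟩ h1
    by_cases hjv : j = v
    · subst hjv
      have h1 : ¬ Chord S i j := h'.resolve_left fun h2 => (hf _ _ h2).2 rfl
      have h2 := hc.left i hi hij
      by_cases hiu : i = u
      · simp [hiu, huv.ne]
      · exact absurd ⟨hi, hj, hij, ⟨u, hc.hu, by omega, huv⟩, ⟨w, hc.hw, Or.inr hvw⟩⟩ h1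
    simp only [hiv, hjv, if_false]
    refine hXf i (mem_erase.2 ⟨hiv, hi⟩) j (mem_erase.2 ⟨hjv, hj⟩) hij ?_
    by_cases he : (i, j) = (u, w)
    · right
      simp only [Prod.mk.injEq] at he
      obtain ⟨rfl, rfl⟩ := he
      rintro ⟨-, -, -, ⟨k, hk, hk1, hk2⟩, -⟩
      rw [mem_erase] at hk
      have h1 := hc.left k hk.2
      have h2 := hc.right k hk.2
      omega
    · rcases h' with h' | h'
      · exact Or.inl (mem_erase.2 ⟨he, h'⟩)
      · right
        rintro ⟨-, -, -, ⟨k, hk, hk'⟩, ⟨l, hl, hl'⟩⟩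
        exact h' ⟨hi, hj, hij, ⟨k, mem_of_mem_erase hk, hk'⟩, ⟨l, mem_of_mem_erase hl, hl'⟩⟩

/-- A tropical point is determined by its values on a triangulation and on the edges. -/
lemma trop_unique {X Y : ℕ → ℕ → ℝ} (m : ℕ) : ∀ {S : Finset ℕ} {T : Finset (ℕ × ℕ)}, NC S T →
    S.card = m + 3 → T.card = m → TropOn S X → TropOn S Y →
    (∀ i ∈ S, ∀ j ∈ S, i < j → ((i, j) ∈ T ∨ ¬ Chord S i j) → X i j = Y i j) →
    ∀ i ∈ S, ∀ j ∈ S, i < j → X i j = Y i j := by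
  induction m with
  | zero =>
    intro S T h hS hT _ _ hXY i hi j hj hij
    refine hXY i hi j hj hij (Or.inr fun hch => ?_)
    have h1 : NC S {(i, j)} := by
      refine ⟨fun i' j' hij' => ?_, fun i' j' k l hij' hkl => ?_⟩
      · simp only [mem_singleton, Prod.mk.injEq] at hij'
        obtain ⟨rfl, rfl⟩ := hij'
        exact hch
      · simp only [mem_singleton, Prod.mk.injEq] at hij' hkl
        omega
    have := h1.card_le 0 hS
    simp at this
  | succ m ih =>
    intro S T h hS hT hX hY hXY
    obtain ⟨u, v, w, hc, huw, hf, hN, hS', hT'⟩ := h.exists_ear hS hT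
    have huv := hc.uv
    have hvw := hc.vw
    have hu : u ∈ S.erase v := mem_erase.2 ⟨by omega, hc.hu⟩
    have hw : w ∈ S.erase v := mem_erase.2 ⟨by omega, hc.hw⟩
    have res : ∀ Z, TropOn S Z → TropOn (S.erase v) Z := fun Z hZ p hp q hq r hr s hs =>
      hZ p (mem_of_mem_erase hp) q (mem_of_mem_erase hq) r (mem_of_mem_erase hr)
        s (mem_of_mem_erase hs)
    have hEuw : X u w = Y u w := hXY u hc.hu w hc.hw (by omega) (Or.inl huw)
    have hEuv : X u v = Y u v := hXY u hc.hu v hc.hv huv (Or.inr (by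
      rintro ⟨-, -, -, ⟨k, hk, hk1, hk2⟩, -⟩
      have := hc.left k hk hk2
      omega))
    have hEvw : X v w = Y v w := hXY v hc.hv w hc.hw hvw (Or.inr (by
      rintro ⟨-, -, -, ⟨k, hk, hk1, hk2⟩, -⟩
      have := hc.right k hk hk1
      omega))
    have hE : ∀ i ∈ S.erase v, ∀ j ∈ S.erase v, i < j → X i j = Y i j := by
      refine ih hN hS' hT' (res X hX) (res Y hY) fun i hi j hj hij h' => ?_
      by_cases he : (i, j) = (u, w)
      · simp only [Prod.mk.injEq] at he
        rw [he.1, he.2, hEuw]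
      refine hXY i (mem_of_mem_erase hi) j (mem_of_mem_erase hj) hij ?_
      rcases h' with h' | h'
      · exact Or.inl (mem_of_mem_erase h')
      · by_cases hT2 : (i, j) ∈ T
        · exact Or.inl hT2
        right
        rintro ⟨-, -, -, ⟨k, hk, hk1, hk2⟩, ⟨l, hl, hl'⟩⟩
        rw [mem_erase] at hi hj
        -- As in `NC.erase`, a diagonal other than `{u w}` and not ending at `v` stays a diagonal.
        have h3 := hc.left i hi.2
        have h4 := hc.right j hj.2
        refine h' ⟨mem_erase.2 hi, mem_erase.2 hj, hij, ?_, ?_⟩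
        · by_cases hkv : k = v
          · by_cases hiu : i = u
            · have : j ≠ w := by rintro rfl; exact he (by rw [hiu])
              exact ⟨w, hw, by omega, by omega⟩
            · exact ⟨u, hu, by omega, by omega⟩
          · exact ⟨k, mem_erase.2 ⟨hkv, hk⟩, hk1, hk2⟩
        · by_cases hlv : l = v
          · subst hlv
            rcases hl' with hl' | hl'
            · exact ⟨u, hu, by omega⟩
            · exact ⟨w, hw, by omega⟩
          · exact ⟨l, mem_erase.2 ⟨hlv, hl⟩, hl'⟩
    intro i hi j hj hij
    by_cases hiv : i = v
    · subst hiv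
      rcases (hc.right j hj hij).eq_or_lt with rfl | hlt
      · exact hEvw
      have hj' : j ∈ S.erase i := mem_erase.2 ⟨by omega, hj⟩
      have h1 := hX u hc.hu i hi w hc.hw j hj huv hvw hlt
      have h2 := hY u hc.hu i hi w hc.hw j hj huv hvw hlt
      rw [hEuw, hEuv, hEvw, hE w hw j hj' hlt, hE u hu j hj' (by omega)] at h1
      linarith
    by_cases hjv : j = v
    · subst hjv
      rcases (hc.left i hi hij).eq_or_lt with rfl | hlt
      · exact hEuv
      have hi' : i ∈ S.erase j := mem_erase.2 ⟨by omega, hi⟩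
      have h1 := hX i hi u hc.hu j hj w hc.hw hlt huv hvw
      have h2 := hY i hi u hc.hu j hj w hc.hw hlt huv hvw
      rw [hEuw, hEuv, hEvw, hE i hi' w hw (by omega), hE i hi' u hu (by omega)] at h1
      linarith
    exact hE i (mem_erase.2 ⟨hiv, hi⟩) j (mem_erase.2 ⟨hjv, hj⟩) hij

/-! ### From cyclic to linear order -/

lemma val_sub (n : ℕ) (p q : ZMod (n + 3)) :
    (p.val ≤ q.val ∧ (q - p).val = q.val - p.val) ∨
      (q.val < p.val ∧ (q - p).val = q.val + (n + 3) - p.val) := by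
  rcases le_or_gt p.val q.val with h | h
  · exact Or.inl ⟨h, ZMod.val_sub h⟩
  · refine Or.inr ⟨h, ?_⟩
    have h1 : (p - q).val = p.val - q.val := ZMod.val_sub h.le
    have hp := ZMod.val_lt p
    have : NeZero (p - q) := ⟨fun h0 => by rw [h0, ZMod.val_zero] at h1; omega⟩
    rw [← neg_sub p q, ZMod.val_neg_of_ne_zero, h1]
    omega

lemma clockwise_iff (n : ℕ) (p q r s : ZMod (n + 3)) : Clockwise n p q r s ↔
    (p.val < q.val ∧ q.val < r.val ∧ r.val < s.val) ∨
    (q.val < r.val ∧ r.val < s.val ∧ s.val < p.val) ∨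
    (r.val < s.val ∧ s.val < p.val ∧ p.val < q.val) ∨
    (s.val < p.val ∧ p.val < q.val ∧ q.val < r.val) := by
  unfold Clockwise
  have h1 := val_sub n p q
  have h2 := val_sub n p r
  have h3 := val_sub n p s
  have := ZMod.val_lt p
  have := ZMod.val_lt q
  have := ZMod.val_lt r
  have := ZMod.val_lt s
  omega

lemma eq_add_one_iff (n : ℕ) (i j : ZMod (n + 3)) :
    j = i + 1 ↔ j.val = i.val + 1 ∨ (j.val = 0 ∧ i.val = n + 2) := by
  have hi := ZMod.val_lt i
  have hj := ZMod.val_lt j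
  have h1 : (1 : ZMod (n + 3)).val = 1 := ZMod.val_one_eq_one_mod _ |>.trans (by
    rw [Nat.mod_eq_of_lt]; omega)
  rw [← (ZMod.val_injective (n + 3)).eq_iff, ZMod.val_add, h1]
  by_cases h : i.val + 1 < n + 3
  · rw [Nat.mod_eq_of_lt h]; omega
  · rw [show i.val + 1 = n + 3 by omega, Nat.mod_self]; omega

lemma isEdge_iff (n : ℕ) {i j : ZMod (n + 3)} (h : i.val < j.val) :
    IsEdge n i j ↔ ¬ Chord (range (n + 3)) i.val j.val := by
  have hi := ZMod.val_lt i
  have hj := ZMod.val_lt j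
  unfold IsEdge
  rw [eq_add_one_iff, eq_add_one_iff]
  constructor
  · rintro h' ⟨-, -, -, ⟨k, -, hk⟩, ⟨l, hl, hl'⟩⟩
    rw [mem_range] at hl
    omega
  · intro h'
    by_contra h2
    refine h' ⟨mem_range.2 hi, mem_range.2 hj, h, ⟨i.val + 1, mem_range.2 (by omega), by omega⟩, ?_⟩
    by_cases h0 : 0 < i.val
    · exact ⟨0, mem_range.2 (by omega), Or.inl h0⟩
    · exact ⟨n + 2, mem_range.2 (by omega), by omega⟩

/-- The diagonals of `T` as increasing pairs of natural numbers. -/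
def natDiags (n : ℕ) (T : PartialTri n) : Finset (ℕ × ℕ) :=
  {p ∈ range (n + 3) ×ˢ range (n + 3) |
    p.1 < p.2 ∧ s((p.1 : ZMod (n + 3)), (p.2 : ZMod (n + 3))) ∈ T.diags}

lemma mem_natDiags (n : ℕ) (T : PartialTri n) (i j : ZMod (n + 3)) :
    (i.val, j.val) ∈ natDiags n T ↔ i.val < j.val ∧ s(i, j) ∈ T.diags := by
  have hi := ZMod.val_lt i
  have hj := ZMod.val_lt j
  simp [natDiags, hi, hj]

lemma exists_zmod (n : ℕ) {i : ℕ} (h : i ∈ range (n + 3)) : ∃ a : ZMod (n + 3), a.val = i :=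
  ⟨i, ZMod.val_cast_of_lt (mem_range.1 h)⟩

lemma exists_of_mem_natDiags (n : ℕ) (T : PartialTri n) {i j : ℕ} (h : (i, j) ∈ natDiags n T) :
    ∃ a b : ZMod (n + 3), a.val = i ∧ b.val = j ∧ a.val < b.val ∧ s(a, b) ∈ T.diags := by
  have h' : (i, j) ∈ range (n + 3) ×ˢ range (n + 3) := (mem_filter.1 h).1
  rw [mem_product] at h'
  obtain ⟨a, rfl⟩ := exists_zmod n h'.1
  obtain ⟨b, rfl⟩ := exists_zmod n h'.2
  exact ⟨a, b, rfl, rfl, (mem_natDiags n T a b).1 h⟩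

lemma natDiags_nc (n : ℕ) (T : PartialTri n) : NC (range (n + 3)) (natDiags n T) := by
  refine ⟨fun i j hij => ?_, fun i j k l hij hkl h1 h2 h3 => ?_⟩
  · obtain ⟨a, b, rfl, rfl, hab, hT⟩ := exists_of_mem_natDiags n T hij
    by_contra hc
    exact (T.mem_isDiag a b hT).2 ((isEdge_iff n hab).2 hc)
  · obtain ⟨a, b, rfl, rfl, hab, hT⟩ := exists_of_mem_natDiags n T hij
    obtain ⟨c, d, rfl, rfl, hcd, hT'⟩ := exists_of_mem_natDiags n T hkl
    exact T.noncross a b c d hT hT' (Or.inl ((clockwise_iff n _ _ _ _).2 (Or.inl ⟨h1, h2, h3⟩)))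

lemma natDiags_card (n : ℕ) (T : PartialTri n) (hT : T.diags.card = n) :
    (natDiags n T).card = n := by
  refine le_antisymm ((natDiags_nc n T).card_le n (card_range _)) ?_
  have hsub : T.diags ⊆
      (natDiags n T).image fun p => s((p.1 : ZMod (n + 3)), (p.2 : ZMod (n + 3))) := by
    intro e he
    induction e using Sym2.ind with
    | _ i j =>
    rw [mem_image]
    have hne : i.val ≠ j.val := fun h => (T.mem_isDiag i j he).1 (ZMod.val_injective _ h)
    rcases hne.lt_or_gt with h | h
    · exact ⟨(i.val, j.val), (mem_natDiags n T i j).2 ⟨h, he⟩, by simp⟩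
    · exact ⟨(j.val, i.val), (mem_natDiags n T j i).2 ⟨h, Sym2.eq_swap ▸ he⟩, by
        simp [Sym2.eq_swap]⟩
  calc n = T.diags.card := hT.symm
    _ ≤ _ := card_le_card hsub
    _ ≤ _ := card_image_le

/-- The symmetric function on `ZMod (n + 3)` with values `X i j` for `i < j`, and zero on
the diagonal. -/
noncomputable def symmetrize (n : ℕ) (X : ℕ → ℕ → ℝ) (i j : ZMod (n + 3)) : ℝ :=
  if i = j then 0 else X (min i.val j.val) (max i.val j.val)

lemma symmetrize_comm (n : ℕ) (X : ℕ → ℕ → ℝ) (i j : ZMod (n + 3)) :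
    symmetrize n X i j = symmetrize n X j i := by
  unfold symmetrize
  rw [min_comm, max_comm]
  simp only [eq_comm]

lemma symmetrize_of_lt (n : ℕ) (X : ℕ → ℕ → ℝ) {i j : ZMod (n + 3)} (h : i.val < j.val) :
    symmetrize n X i j = X i.val j.val := by
  have : i ≠ j := by rintro rfl; exact lt_irrefl _ h
  simp [symmetrize, this, h.le]

/-- A tropical point on the linearly ordered polygon that vanishes on the edges is a point of
`L(ℝ)`: the tropical Plücker relation is invariant under rotation of its four vertices. -/
noncomputable def toTropPt (n : ℕ) (X : ℕ → ℕ → ℝ) (hX : TropOn (range (n + 3)) X)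
    (h0 : ∀ i j : ZMod (n + 3), i.val < j.val → IsEdge n i j → X i.val j.val = 0) : TropPt n where
  x := symmetrize n X
  symm := symmetrize_comm n X
  diag_zero i := by simp [symmetrize]
  edge_zero i j h := by
    rcases lt_trichotomy i.val j.val with hlt | heq | hlt
    · rw [symmetrize_of_lt n X hlt, h0 i j hlt h]
    · simp [symmetrize, ZMod.val_injective _ heq]
    · rw [symmetrize_comm, symmetrize_of_lt n X hlt, h0 j i hlt (Or.symm h)]
  pluecker p q r s h := by
    have key : ∀ p q r s : ZMod (n + 3), p.val < q.val → q.val < r.val → r.val < s.val →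
        symmetrize n X p r + symmetrize n X q s =
          max (symmetrize n X p q + symmetrize n X r s)
            (symmetrize n X q r + symmetrize n X p s) := by
      intro p q r s h1 h2 h3
      have hm : ∀ z : ZMod (n + 3), z.val ∈ range (n + 3) := fun z => mem_range.2 (ZMod.val_lt z)
      rw [symmetrize_of_lt n X (h1.trans h2), symmetrize_of_lt n X (h2.trans h3),
        symmetrize_of_lt n X h1, symmetrize_of_lt n X h2, symmetrize_of_lt n X h3,
        symmetrize_of_lt n X (h1.trans (h2.trans h3))]
      exact hX _ (hm p) _ (hm q) _ (hm r) _ (hm s) h1 h2 h3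
    have c := symmetrize_comm n X
    rcases (clockwise_iff n p q r s).1 h with h | h | h | h
    · exact key p q r s h.1 h.2.1 h.2.2
    · have := key q r s p h.1 h.2.1 h.2.2
      rw [c r p, c s p, c q p, max_comm, add_comm (symmetrize n X r s)] at this
      linarith
    · have := key r s p q h.1 h.2.1 h.2.2
      rw [c r p, c s q, c r q, c s p, add_comm (symmetrize n X r s), add_comm (symmetrize n X p s)]
        at this
      linarith
    · have := key s p q r h.1 h.2.1 h.2.2
      rw [c s q, c s p, c s r, max_comm, add_comm (symmetrize n X p s)] at this
      linarith

/-- A point of `L(ℝ)` restricts to a tropical point on the linearly ordered polygon. -/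
lemma tropOn_of_tropPt (n : ℕ) (x : TropPt n) : TropOn (range (n + 3)) (fun i j => x.x i j) := by
  intro p hp q hq r hr s hs h1 h2 h3
  obtain ⟨p, rfl⟩ := exists_zmod n hp
  obtain ⟨q, rfl⟩ := exists_zmod n hq
  obtain ⟨r, rfl⟩ := exists_zmod n hr
  obtain ⟨s, rfl⟩ := exists_zmod n hs
  simpa using x.pluecker p q r s ((clockwise_iff n _ _ _ _).2 (Or.inl ⟨h1, h2, h3⟩))

lemma TropPt.ext_of_lt (n : ℕ) {x y : TropPt n}
    (h : ∀ i j : ZMod (n + 3), i.val < j.val → x.x i j = y.x i j) : x = y := by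
  have : x.x = y.x := by
    funext i j
    rcases lt_trichotomy i.val j.val with hlt | heq | hlt
    · exact h i j hlt
    · rw [ZMod.val_injective _ heq, x.diag_zero, y.diag_zero]
    · rw [x.symm, y.symm, h j i hlt]
  cases x
  cases y
  simpa using this

end EarCut

open EarCut in
/-- For every complete triangulation `T` and every (symmetric) family of reals
`(c_{ij})_{{ij}∈T}` there is a unique `x ∈ L(ℝ)` with `x_{ij} = c_{ij}` for all
`{ij} ∈ T`; i.e. the face `F_c^T` of a complete triangulation is a single point. -/
theorem face_of_complete_triangulation_is_point
    (n : ℕ) (hn : 1 ≤ n) (T : PartialTri n) (hT : T.diags.card = n)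
    (c : ZMod (n + 3) → ZMod (n + 3) → ℝ) (hc : ∀ i j, c i j = c j i) :
    ∃! x : TropPt n, ∀ i j, s(i, j) ∈ T.diags → x.x i j = c i j := by
  have hN := natDiags_nc n T
  have hcard := natDiags_card n T hT
  have hm : ∀ z : ZMod (n + 3), z.val ∈ range (n + 3) := fun z => mem_range.2 (ZMod.val_lt z)
  obtain ⟨X, hX, hXf⟩ := exists_trop
    (fun i j => if (i, j) ∈ natDiags n T then c i j else 0) n hN (card_range _) hcard
  refine ⟨toTropPt n X hX fun i j hij hE => ?_, fun i j hij => ?_, fun y hy => ?_⟩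
  · have hch := (isEdge_iff n hij).1 hE
    rw [hXf _ (hm i) _ (hm j) hij (Or.inr hch), if_neg fun h => hch (hN.chord _ _ h)]
  · have key : ∀ i j : ZMod (n + 3), i.val < j.val → s(i, j) ∈ T.diags →
        symmetrize n X i j = c i j := by
      intro i j hlt hij
      have hmem := (mem_natDiags n T i j).2 ⟨hlt, hij⟩
      rw [symmetrize_of_lt n X hlt, hXf _ (hm i) _ (hm j) hlt (Or.inl hmem), if_pos hmem]
      simp
    have hne : i.val ≠ j.val := fun h => (T.mem_isDiag i j hij).1 (ZMod.val_injective _ h)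
    rcases hne.lt_or_gt with h | h
    · exact key i j h hij
    · exact (symmetrize_comm n X i j).trans ((key j i h (Sym2.eq_swap ▸ hij)).trans (hc j i))
  · have hy' := tropOn_of_tropPt n y
    have huniq := trop_unique n hN (card_range _) hcard hy' hX ?_
    · refine TropPt.ext_of_lt n fun i j hij => ?_
      have := huniq _ (hm i) _ (hm j) hij
      simp only [ZMod.natCast_val, ZMod.cast_id', id_eq] at this
      exact this.trans (symmetrize_of_lt n X hij).symm
    · intro i hi j hj hij h'
      rw [hXf i hi j hj hij h']
      obtain ⟨a, rfl⟩ := exists_zmod n hi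
      obtain ⟨b, rfl⟩ := exists_zmod n hj
      simp only [ZMod.natCast_val, ZMod.cast_id', id_eq]
      split_ifs with hmem
      · exact hy a b ((mem_natDiags n T a b).1 hmem).2
      · exact y.edge_zero a b ((isEdge_iff n hij).2 (h'.resolve_left hmem))
end
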